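/- arXiv:2503.13243 — 8 statements merged into one kernel-verified Lean document; each statement's English description precedes it below -/
import Mathlib

section
/- Let p denote the order of σ₁. Then p ≥ 3 and the group G = ⟨σ₁, σ₂⟩ acts transitively on the arcs of Γ. -/
/-!
Let `G = ⟨σ₁, σ₂⟩`. Since `⟨σ₂⟩` is transitive on the neighbours of `v`, one of which, `σ₁ v`, lies
in the `G`-orbit of `v`, this orbit contains every neighbour of `v`, so is closed under adjacency,
and so is everything by connectedness. Vertex transitivity and transitivity of a vertex stabiliser
on the neighbours of that vertex give arc transitivity.

For the order of `σ₁`, evaluating `(σ₁σ₂)² = 1` at `v` shows that `σ₂` sends the neighbour `σ₁ v` to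
`σ₁⁻¹ v`. If `σ₁² = 1`, then `⟨σ₂⟩` fixes `σ₁ v`, which is therefore the only neighbour of `v`.
-/

open MulAction

section GraphAction

variable {V : Type*} {Γ : SimpleGraph V} {v : V} {G : Type*} [Group G] [MulAction G V]

/-- The action of `G` on the vertices of `Γ` is by graph automorphisms. -/
def PreservesAdj (G : Type*) [SMul G V] (Γ : SimpleGraph V) : Prop :=
  ∀ (g : G) (x y : V), Γ.Adj (g • x) (g • y) ↔ Γ.Adj x y

/-- `G` acts transitively on the arcs of `Γ`, that is, on its ordered pairs of adjacent vertices. -/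
def IsArcTransitive (G : Type*) [SMul G V] (Γ : SimpleGraph V) : Prop :=
  ∀ u₁ w₁ u₂ w₂ : V, Γ.Adj u₁ w₁ → Γ.Adj u₂ w₂ → ∃ g : G, g • u₁ = u₂ ∧ g • w₁ = w₂

open scoped Pointwise in
theorem preservesAdj_closure {s : Set G}
    (hs : ∀ g ∈ s, ∀ x y : V, Γ.Adj (g • x) (g • y) ↔ Γ.Adj x y) :
    PreservesAdj (Subgroup.closure s) Γ := by
  have closure_le_stabilizer :
      Subgroup.closure s ≤ stabilizer G {a : V × V | Γ.Adj a.1 a.2} :=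
    (Subgroup.closure_le _).mpr fun g hg ↦ mem_stabilizer_set.mpr fun a ↦ hs g hg a.1 a.2
  exact fun g x y ↦ mem_stabilizer_set.mp (closure_le_stabilizer g.2) (x, y)

theorem PreservesAdj.adj_inv_smul_iff (hG : PreservesAdj G Γ) (g : G) (x y : V) :
    Γ.Adj x (g⁻¹ • y) ↔ Γ.Adj (g • x) y := by
  rw [← hG g, smul_inv_smul]

theorem PreservesAdj.isPretransitive (hG : PreservesAdj G Γ) (hconn : Γ.Preconnected)
    (hv : Γ.neighborSet v ⊆ orbit G v) : IsPretransitive G V := by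
  have orbit_closed_under_adj : ∀ x y, Γ.Adj x y → x ∈ orbit G v → y ∈ orbit G v := by
    rintro _ y hxy ⟨g, rfl⟩
    have hy : g⁻¹ • y ∈ orbit G v := hv ((hG.adj_inv_smul_iff g v y).mpr hxy)
    simpa only [smul_inv_smul] using mem_orbit_of_mem_orbit g hy
  refine (isPretransitive_iff_orbit_eq_univ v).mpr (Set.eq_univ_of_forall fun x ↦ ?_)
  obtain ⟨walk⟩ := hconn v x
  suffices ∀ {x y : V}, Γ.Walk x y → x ∈ orbit G v → y ∈ orbit G v from
    this walk (mem_orbit_self v)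
  intro x y walk
  induction walk with
  | nil => exact id
  | cons hadj _ ih => exact fun hx ↦ ih (orbit_closed_under_adj _ _ hadj hx)

theorem PreservesAdj.isArcTransitive [IsPretransitive G V] (hG : PreservesAdj G Γ)
    (hv : ∀ w w' : V, Γ.Adj v w → Γ.Adj v w' → ∃ g ∈ stabilizer G v, g • w = w') :
    IsArcTransitive G Γ := by
  intro u₁ w₁ u₂ w₂ h₁ h₂
  obtain ⟨g₁, rfl⟩ := exists_smul_eq G v u₁
  obtain ⟨g₂, rfl⟩ := exists_smul_eq G v u₂
  obtain ⟨s, hsv, hsw⟩ := hv (g₁⁻¹ • w₁) (g₂⁻¹ • w₂)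
    ((hG.adj_inv_smul_iff ..).mpr h₁) ((hG.adj_inv_smul_iff ..).mpr h₂)
  refine ⟨g₂ * s * g₁⁻¹, ?_, ?_⟩
  · rw [mul_smul, inv_smul_smul, mul_smul, mem_stabilizer_iff.mp hsv]
  · rw [mul_smul, mul_smul, hsw, smul_inv_smul]

theorem isArcTransitive_closure_pair {a b : G} (hconn : Γ.Preconnected)
    (ha : ∀ x y : V, Γ.Adj (a • x) (a • y) ↔ Γ.Adj x y)
    (hb : ∀ x y : V, Γ.Adj (b • x) (b • y) ↔ Γ.Adj x y)
    (hbv : b • v = v)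
    (htrans : ∀ w w' : V, Γ.Adj v w → Γ.Adj v w' → ∃ k : ℤ, b ^ k • w = w')
    (hav : Γ.Adj v (a • v)) :
    IsArcTransitive (Subgroup.closure {a, b}) Γ := by
  let H := Subgroup.closure {a, b}
  let a' : H := ⟨a, Subgroup.subset_closure (Set.mem_insert a {b})⟩
  let b' : H := ⟨b, Subgroup.subset_closure (Set.mem_insert_of_mem a rfl)⟩
  have hH : PreservesAdj H Γ := preservesAdj_closure <| by
    rintro g (rfl | rfl)
    exacts [ha, hb]
  have hb'v : b' ∈ stabilizer H v := hbv
  have neighborSet_subset_orbit : Γ.neighborSet v ⊆ orbit H v := by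
    intro w hw
    obtain ⟨k, hk⟩ := htrans _ w hav hw
    exact ⟨b' ^ k * a', (mul_smul (b ^ k) a v).trans hk⟩
  have := hH.isPretransitive hconn neighborSet_subset_orbit
  refine hH.isArcTransitive (v := v) fun w w' hw hw' ↦ ?_
  obtain ⟨k, hk⟩ := htrans w w' hw hw'
  exact ⟨b' ^ k, zpow_mem hb'v k, hk⟩

end GraphAction

section Order

variable {G α : Type*} [Group G] [MulAction G α] {a b : G} {v : α}

theorem smul_smul_eq_inv_smul (hbv : b • v = v) (hab : (a * b) * (a * b) = 1) :
    b • a • v = a⁻¹ • v := by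
  rw [eq_inv_smul_iff]
  calc a • b • a • v = a • b • a • b • v := by rw [hbv]
    _ = ((a * b) * (a * b)) • v := by simp only [mul_smul]
    _ = v := by rw [hab, one_smul]

theorem sq_ne_one_of_zpowers_transitive {s : Set α} (hs : s.Nontrivial) (hbv : b • v = v)
    (htrans : ∀ w ∈ s, ∃ k : ℤ, b ^ k • a • v = w)
    (hab : (a * b) * (a * b) = 1) : a ^ 2 ≠ 1 := by
  intro ha
  have hbav : a • v ∈ fixedBy α b := by
    rw [mem_fixedBy, smul_smul_eq_inv_smul hbv hab, inv_eq_of_mul_eq_one_left (sq a ▸ ha)]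
  obtain ⟨w, hw, hne⟩ := hs.exists_ne (a • v)
  obtain ⟨k, rfl⟩ := htrans w hw
  exact hne (mem_fixedBy_zpow hbav k)

theorem three_le_orderOf_of_sq_ne_one {g : G} (hfin : IsOfFinOrder g) (hg : g ^ 2 ≠ 1) :
    3 ≤ orderOf g := by
  have hpos : 0 < orderOf g := hfin.orderOf_pos
  have hdvd : ¬orderOf g ∣ 2 := mt orderOf_dvd_iff_pow_eq_one.mp hg
  by_contra! hlt
  interval_cases orderOf g <;> norm_num at hdvd

end Order

theorem nontrivial_neighborSet_of_one_lt_degree {V : Type*} {Γ : SimpleGraph V} {v : V}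
    [Fintype (Γ.neighborSet v)] (h : 1 < Γ.degree v) : (Γ.neighborSet v).Nontrivial := by
  rwa [← Set.nontrivial_coe_sort, ← Fintype.one_lt_card_iff_nontrivial,
    Γ.card_neighborSet_eq_degree]

theorem statement0_general {V : Type*} {Γ : SimpleGraph V} {v : V} {σ₁ σ₂ : Equiv.Perm V}
    (hconn : Γ.Preconnected) (hnontriv : (Γ.neighborSet v).Nontrivial)
    (haut₁ : ∀ x y : V, Γ.Adj (σ₁ x) (σ₁ y) ↔ Γ.Adj x y)
    (haut₂ : ∀ x y : V, Γ.Adj (σ₂ x) (σ₂ y) ↔ Γ.Adj x y)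
    (hfix : σ₂ v = v)
    (htrans : ∀ w w' : V, Γ.Adj v w → Γ.Adj v w' → ∃ k : ℤ, (σ₂ ^ k) w = w')
    (hnbr : Γ.Adj v (σ₁ v))
    (hinvol : (σ₁ * σ₂) * (σ₁ * σ₂) = 1) :
    (IsOfFinOrder σ₁ → 3 ≤ orderOf σ₁) ∧
      ∀ u₁ w₁ u₂ w₂ : V, Γ.Adj u₁ w₁ → Γ.Adj u₂ w₂ →
        ∃ g ∈ Subgroup.closure {σ₁, σ₂}, g u₁ = u₂ ∧ g w₁ = w₂ := by
  have σ₁_sq_ne_one : σ₁ ^ 2 ≠ 1 :=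
    sq_ne_one_of_zpowers_transitive hnontriv hfix (fun w hw ↦ htrans _ w hnbr hw) hinvol
  refine ⟨fun hfin ↦ three_le_orderOf_of_sq_ne_one hfin σ₁_sq_ne_one, fun u₁ w₁ u₂ w₂ h₁ h₂ ↦ ?_⟩
  obtain ⟨g, hg⟩ :=
    isArcTransitive_closure_pair (a := σ₁) (b := σ₂) hconn haut₁ haut₂ hfix htrans hnbr
      u₁ w₁ u₂ w₂ h₁ h₂
  exact ⟨g, g.2, hg⟩

theorem statement0 {V : Type*} [Fintype V] [DecidableEq V]
    (q : ℕ) (hq : 3 ≤ q)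
    (Γ : SimpleGraph V) [DecidableRel Γ.Adj]
    (hconn : Γ.Connected) (hreg : ∀ x : V, Γ.degree x = q)
    (v : V) (σ₁ σ₂ : Equiv.Perm V)
    (haut₁ : ∀ x y : V, Γ.Adj (σ₁ x) (σ₁ y) ↔ Γ.Adj x y)
    (haut₂ : ∀ x y : V, Γ.Adj (σ₂ x) (σ₂ y) ↔ Γ.Adj x y)
    (hfix : σ₂ v = v)
    (htrans : ∀ w w' : V, Γ.Adj v w → Γ.Adj v w' → ∃ k : ℤ, (σ₂ ^ k) w = w')
    (hnbr : Γ.Adj v (σ₁ v))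
    (hinvol : (σ₁ * σ₂) * (σ₁ * σ₂) = 1) :
    3 ≤ orderOf σ₁ ∧
      ∀ u₁ w₁ u₂ w₂ : V, Γ.Adj u₁ w₁ → Γ.Adj u₂ w₂ →
        ∃ g ∈ Subgroup.closure {σ₁, σ₂}, g u₁ = u₂ ∧ g w₁ = w₂ := by
  have h := statement0_general hconn.preconnected (nontrivial_neighborSet_of_one_lt_degree
    (by rw [hreg v]; lia)) haut₁ haut₂ hfix htrans hnbr hinvol
  exact ⟨h.1 (isOfFinOrder_of_finite σ₁), h.2⟩
end

section
/- Let p denote the order of σ₁ and let w = v·σ₁. If the stabiliser in G = ⟨σ₁, σ₂⟩ of the arc (v, w) is trivial, then the vertices v·σ₁^k for 0 ≤ k ≤ p−1 are pairwise distinct; that is, the closed walk (v, v·σ₁, v·σ₁², …, v·σ₁^p) is a cycle of Γ. -/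
/-!
Every power of `g` commutes with `g`, so a power fixing the vertex `a` fixes `g • a` as well, hence
the whole arc `(a, g • a)`. If the arc stabiliser is trivial, the cyclic group generated by `g` thus
acts freely on the orbit of `a`, and powers of `g` with the same image of `a` are equal.
-/

open MulAction

section ArcStabilizer

variable {G α : Type*} [Group G] [MulAction G α]

theorem stabilizer_inf_centralizer_le_stabilizer_smul (g : G) (a : α) :
    stabilizer G a ⊓ Subgroup.centralizer {g} ≤ stabilizer G (g • a) := by
  rintro h ⟨h_fix, h_comm⟩
  calc h • g • a = g • h • a := by
        rw [smul_smul, smul_smul, Subgroup.mem_centralizer_singleton_iff.mp h_comm]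
    _ = g • a := by rw [mem_stabilizer_iff.mp h_fix]

theorem disjoint_stabilizer_of_disjoint_arc_stabilizer {H : Subgroup G} {g : G} {a : α}
    (hcomm : H ≤ Subgroup.centralizer {g})
    (harc : Disjoint H (stabilizer G a ⊓ stabilizer G (g • a))) :
    Disjoint H (stabilizer G a) :=
  Subgroup.disjoint_def.mpr fun hH ha ↦
    Subgroup.disjoint_def.mp harc hH
      ⟨ha, stabilizer_inf_centralizer_le_stabilizer_smul g a ⟨ha, hcomm hH⟩⟩

theorem injOn_smul_of_disjoint_stabilizer {H : Subgroup G} {a : α}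
    (hfree : Disjoint H (stabilizer G a)) : Set.InjOn (fun h : G ↦ h • a) H := by
  intro x hx y hy hxy
  have hquot : y⁻¹ * x ∈ stabilizer G a := by
    rw [mem_stabilizer_iff, mul_smul, inv_smul_eq_iff]
    exact hxy
  exact (inv_mul_eq_one.mp
    (Subgroup.disjoint_def.mp hfree (H.mul_mem (H.inv_mem hy) hx) hquot)).symm

theorem statement1_general {g : G} {a : α}
    (harc : Disjoint (Subgroup.zpowers g) (stabilizer G a ⊓ stabilizer G (g • a))) {k l : ℕ} :
    g ^ k • a = g ^ l • a ↔ k ≡ l [MOD orderOf g] := by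
  have hfree : Disjoint (Subgroup.zpowers g) (stabilizer G a) :=
    disjoint_stabilizer_of_disjoint_arc_stabilizer
      (Subgroup.zpowers_le.mpr (Subgroup.mem_centralizer_singleton_iff.mpr rfl)) harc
  rw [← pow_eq_pow_iff_modEq]
  exact (injOn_smul_of_disjoint_stabilizer hfree).eq_iff
    (Subgroup.npow_mem_zpowers g k) (Subgroup.npow_mem_zpowers g l)

end ArcStabilizer

theorem statement1 {V : Type*} [Fintype V] [DecidableEq V]
    (q : ℕ) (hq : 3 ≤ q)
    (Γ : SimpleGraph V) [DecidableRel Γ.Adj]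
    (hconn : Γ.Connected) (hreg : ∀ x : V, Γ.degree x = q)
    (v : V) (σ₁ σ₂ : Equiv.Perm V)
    (haut₁ : ∀ x y : V, Γ.Adj (σ₁ x) (σ₁ y) ↔ Γ.Adj x y)
    (haut₂ : ∀ x y : V, Γ.Adj (σ₂ x) (σ₂ y) ↔ Γ.Adj x y)
    (hfix : σ₂ v = v)
    (htrans : ∀ w w' : V, Γ.Adj v w → Γ.Adj v w' → ∃ k : ℤ, (σ₂ ^ k) w = w')
    (hnbr : Γ.Adj v (σ₁ v))
    (hinvol : (σ₁ * σ₂) * (σ₁ * σ₂) = 1)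
    (hstab : ∀ g ∈ Subgroup.closure {σ₁, σ₂}, g v = v → g (σ₁ v) = σ₁ v → g = 1) :
    ∀ k l : ℕ, k < orderOf σ₁ → l < orderOf σ₁ →
      (σ₁ ^ k) v = (σ₁ ^ l) v → k = l := by
  have harc : Disjoint (Subgroup.zpowers σ₁)
      (stabilizer (Equiv.Perm V) v ⊓ stabilizer (Equiv.Perm V) (σ₁ • v)) :=
    Subgroup.disjoint_def.mpr fun hpow hfixes ↦ hstab _
      (Subgroup.zpowers_le.mpr (Subgroup.subset_closure (Set.mem_insert _ _)) hpow) hfixes.1 hfixes.2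
  exact fun k l hk hl h ↦ ((statement1_general harc).mp h).eq_of_lt_of_lt hk hl
end

section
/- The permutation σ₁ has order m·n, the permutation σ₂ has order 2m, the product σ₁σ₂ has order 2, and the subgroup G = ⟨σ₁, σ₂⟩ of the automorphism group of Γ has order 2m²n. -/
/-- The lexicographic product `C_n[mK_1]`: vertices `(i,j)` with `(i₁,j₁) ~ (i₂,j₂)`
iff `i₂ = i₁ + 1` or `i₁ = i₂ + 1` (indices modulo `n`). -/
def lexCycle (n m : ℕ) : SimpleGraph (ZMod n × ZMod m) :=
  SimpleGraph.fromRel (fun u v => v.1 = u.1 + 1)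

/-- The representative in `{1, …, n}` of `i` modulo `n`. -/
def zrep {n : ℕ} (i : ZMod n) : ℕ := if i.val = 0 then n else i.val

/-- `ℓ(1) = 0` and `ℓ(i) = 1 + (i-2)(i-1)/2` for `2 ≤ i ≤ n`. -/
def ellFun (i : ℕ) : ℕ := if i = 1 then 0 else 1 + (i - 2) * (i - 1) / 2

/-!
Write `z` for the unit translation `(i, j) ↦ (i, j + 1)`. Going once around the base, `σ₁` picks up
exactly one carry, so `σ₁ ^ n = z` and `σ₁` has order `m * n`. Modulo `m` the function `ℓ` is a
quadratic polynomial with a defect at `i = 1` that matches the carry of `σ₁`. Its symmetries give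
`(σ₁ * σ₂) ^ 2 = 1` and show that `σ₂ ^ 2` is the fibrewise translation by `i - 1`, which has order
`m` and conjugates `σ₁` to `σ₁ ^ (n + 1)`. Since `σ₂ ^ 2` fixes the fibre over `1` pointwise while
`⟨σ₁⟩` acts freely, the subgroup `R = ⟨σ₂ ^ 2, σ₁⟩` is a semidirect product of order `m * (m * n)`.
It centralizes `z`, whereas `σ₂` inverts `z ≠ z⁻¹`, so `σ₂ ∉ R`. The involution `σ₁ * σ₂`
normalizes `R`, which therefore has index two in `⟨σ₁, σ₂⟩`.
-/

section GroupTheory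

variable {G : Type*} [Group G]

theorem card_sup_of_le_normalizer_of_disjoint {H K : Subgroup G}
    (hHK : H ≤ Subgroup.normalizer (K : Set G)) (hdisj : Disjoint H K) :
    Nat.card (H ⊔ K : Subgroup G) = Nat.card H * Nat.card K := by
  have hrange : Set.range (fun p : H × K => (p.1 * p.2 : G)) = (H ⊔ K : Subgroup G) := by
    rw [Subgroup.coe_mul_of_left_le_normalizer_right H K hHK]
    ext x
    simp [Set.mem_mul]
  calc Nat.card (H ⊔ K : Subgroup G)
      = Nat.card (Set.range fun p : H × K => (p.1 * p.2 : G)) := by rw [hrange]; rfl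
    _ = Nat.card H * Nat.card K := by
      rw [Nat.card_range_of_injective (Subgroup.mul_injective_of_disjoint hdisj), Nat.card_prod]

theorem mem_normalizer_closure [Finite G] {s : Set G} {x : G}
    (h : ∀ g ∈ s, x * g * x⁻¹ ∈ Subgroup.closure s) :
    x ∈ Subgroup.normalizer (Subgroup.closure s : Set G) := by
  have hle : Subgroup.closure s ≤ (Subgroup.closure s).comap (MulAut.conj x).toMonoidHom :=
    (Subgroup.closure_le _).2 h
  exact Subgroup.mem_normalizer_fintype fun g hg => hle hg

theorem disjoint_zpowers_of_orderOf_prime {x : G} {H : Subgroup G}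
    (hx : (orderOf x).Prime) (hxH : x ∉ H) : Disjoint (Subgroup.zpowers x) H := by
  have : Fact (Nat.card (Subgroup.zpowers x)).Prime := ⟨by rwa [Nat.card_zpowers]⟩
  rcases Subgroup.eq_bot_or_eq_top_of_prime_card (H.subgroupOf (Subgroup.zpowers x)) with h | h
  · exact (Subgroup.subgroupOf_eq_bot.1 h).symm
  · exact absurd (Subgroup.subgroupOf_eq_top.1 h (Subgroup.mem_zpowers x)) hxH

theorem orderOf_eq_prime_mul_orderOf_pow {p : ℕ} (hp : p.Prime) {x : G}
    (hx : x ∉ Subgroup.zpowers (x ^ p)) : orderOf x = p * orderOf (x ^ p) := by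
  have hdvd : p ∣ orderOf x := by
    by_contra hndvd
    obtain ⟨k, hk⟩ := exists_pow_eq_self_of_coprime (hp.coprime_iff_not_dvd.2 hndvd)
    exact hx ⟨k, by simpa using hk⟩
  rw [orderOf_pow_of_dvd hp.ne_zero hdvd, Nat.mul_div_cancel' hdvd]

theorem closure_pair_eq_sup (x y : G) :
    Subgroup.closure {x, y} = Subgroup.zpowers x ⊔ Subgroup.zpowers y := by
  rw [Set.insert_eq, Subgroup.closure_union, ← Subgroup.zpowers_eq_closure,
    ← Subgroup.zpowers_eq_closure]

theorem card_closure_pair_of_conj_mem [Finite G] {x y : G}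
    (hconj : x * y * x⁻¹ ∈ Subgroup.zpowers y)
    (hdisj : Disjoint (Subgroup.zpowers x) (Subgroup.zpowers y)) :
    Nat.card (Subgroup.closure {x, y}) = orderOf x * orderOf y := by
  have hnormalizer :
      Subgroup.zpowers x ≤ Subgroup.normalizer (Subgroup.zpowers y : Set G) := by
    rw [Subgroup.zpowers_le, Subgroup.zpowers_eq_closure]
    apply mem_normalizer_closure
    simpa [← Subgroup.zpowers_eq_closure] using hconj
  rw [closure_pair_eq_sup, card_sup_of_le_normalizer_of_disjoint hnormalizer hdisj,
    Nat.card_zpowers, Nat.card_zpowers]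

theorem closure_pair_eq_zpowers_mul_sup_closure_sq (a b : G) :
    Subgroup.closure {a, b} =
      Subgroup.zpowers (a * b) ⊔ Subgroup.closure {b ^ 2, a} := by
  have ha : a ∈ Subgroup.closure {a, b} := Subgroup.subset_closure (by simp)
  have hb : b ∈ Subgroup.closure {a, b} := Subgroup.subset_closure (by simp)
  apply le_antisymm
  · have ha' : a ∈ Subgroup.zpowers (a * b) ⊔ Subgroup.closure {b ^ 2, a} :=
      Subgroup.mem_sup_right (Subgroup.subset_closure (by simp))
    have hab' : a * b ∈ Subgroup.zpowers (a * b) ⊔ Subgroup.closure {b ^ 2, a} :=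
      Subgroup.mem_sup_left (Subgroup.mem_zpowers _)
    simpa [Set.insert_subset_iff, ha'] using (Subgroup.mul_mem_cancel_left _ ha').1 hab'
  · simp only [sup_le_iff, Subgroup.zpowers_le, Subgroup.closure_le, Set.insert_subset_iff,
      Set.singleton_subset_iff, SetLike.mem_coe]
    exact ⟨mul_mem ha hb, pow_mem hb 2, ha⟩

theorem mul_mem_normalizer_closure_sq [Finite G] {a b : G} (hab : (a * b) ^ 2 = 1) :
    a * b ∈ Subgroup.normalizer (Subgroup.closure {b ^ 2, a} : Set G) := by
  have ha : a ∈ Subgroup.closure {b ^ 2, a} := Subgroup.subset_closure (by simp)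
  have hb : b ^ 2 ∈ Subgroup.closure {b ^ 2, a} := Subgroup.subset_closure (by simp)
  have hconj_sq : a * b * b ^ 2 * (a * b)⁻¹ = a * b ^ 2 * a⁻¹ := by group
  have hconj : a * b * a * (a * b)⁻¹ = (b ^ 2)⁻¹ * a⁻¹ :=
    calc a * b * a * (a * b)⁻¹ = a * b * (a * b) * ((b ^ 2)⁻¹ * a⁻¹) := by group
      _ = (b ^ 2)⁻¹ * a⁻¹ := by rw [← pow_two, hab, one_mul]
  apply mem_normalizer_closure
  rintro g (rfl | rfl)
  · rw [hconj_sq]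
    exact mul_mem (mul_mem ha hb) (inv_mem ha)
  · rw [hconj]
    exact mul_mem (inv_mem hb) (inv_mem ha)

theorem mul_notMem_closure_sq {a b : G} (hb : b ∉ Subgroup.closure {b ^ 2, a}) :
    a * b ∉ Subgroup.closure {b ^ 2, a} := fun h =>
  hb ((Subgroup.mul_mem_cancel_left _ (Subgroup.subset_closure (by simp))).1 h)

theorem orderOf_mul_eq_two_of_notMem_closure_sq {a b : G} (hab : (a * b) ^ 2 = 1)
    (hb : b ∉ Subgroup.closure {b ^ 2, a}) : orderOf (a * b) = 2 :=
  orderOf_eq_prime hab fun h => mul_notMem_closure_sq hb (h ▸ one_mem _)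

theorem card_closure_pair_of_sq_mul_eq_one [Finite G] {a b : G} (hab : (a * b) ^ 2 = 1)
    (hb : b ∉ Subgroup.closure {b ^ 2, a}) :
    Nat.card (Subgroup.closure {a, b}) = 2 * Nat.card (Subgroup.closure {b ^ 2, a}) := by
  have horder : orderOf (a * b) = 2 := orderOf_mul_eq_two_of_notMem_closure_sq hab hb
  have hdisj : Disjoint (Subgroup.zpowers (a * b)) (Subgroup.closure {b ^ 2, a}) :=
    disjoint_zpowers_of_orderOf_prime (horder ▸ Nat.prime_two) (mul_notMem_closure_sq hb)
  have hnormalizer := Subgroup.zpowers_le.2 (mul_mem_normalizer_closure_sq hab)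
  rw [closure_pair_eq_zpowers_mul_sup_closure_sq,
    card_sup_of_le_normalizer_of_disjoint hnormalizer hdisj, Nat.card_zpowers, horder]

end GroupTheory

section SkewProduct

variable {ι A : Type*} [AddCommGroup A]

/-- The skew product `(i, j) ↦ (e i, j + f i)` of the base permutation `e` with the fibrewise
translations by `f`. -/
def skewProduct (e : Equiv.Perm ι) (f : ι → A) : Equiv.Perm (ι × A) :=
  e.prodShear fun i => Equiv.addRight (f i)

/-- The analogue `(i, j) ↦ (e i, g i - j)` of `skewProduct` that reverses each fibre. -/
def skewReflection (e : Equiv.Perm ι) (g : ι → A) : Equiv.Perm (ι × A) :=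
  e.prodShear fun i => Equiv.subLeft (g i)

@[simp]
theorem skewProduct_apply (e : Equiv.Perm ι) (f : ι → A) (v : ι × A) :
    skewProduct e f v = (e v.1, v.2 + f v.1) := rfl

@[simp]
theorem skewReflection_apply (e : Equiv.Perm ι) (g : ι → A) (v : ι × A) :
    skewReflection e g v = (e v.1, g v.1 - v.2) := rfl

theorem skewProduct_one_zero : skewProduct (1 : Equiv.Perm ι) (0 : ι → A) = 1 := by
  ext v <;> simp

theorem skewProduct_inj {e e' : Equiv.Perm ι} {f f' : ι → A} :
    skewProduct e f = skewProduct e' f' ↔ e = e' ∧ f = f' := by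
  refine ⟨fun h => ?_, fun h => by rw [h.1, h.2]⟩
  have happly (i : ι) : e i = e' i ∧ f i = f' i := by
    simpa using Equiv.congr_fun h (i, (0 : A))
  exact ⟨Equiv.ext fun i => (happly i).1, funext fun i => (happly i).2⟩

theorem skewReflection_inj {e e' : Equiv.Perm ι} {g g' : ι → A} :
    skewReflection e g = skewReflection e' g' ↔ e = e' ∧ g = g' := by
  refine ⟨fun h => ?_, fun h => by rw [h.1, h.2]⟩
  have happly (i : ι) : e i = e' i ∧ g i = g' i := by
    simpa using Equiv.congr_fun h (i, (0 : A))
  exact ⟨Equiv.ext fun i => (happly i).1, funext fun i => (happly i).2⟩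

theorem skewProduct_eq_one_iff {e : Equiv.Perm ι} {f : ι → A} :
    skewProduct e f = 1 ↔ e = 1 ∧ f = 0 := by
  rw [← skewProduct_one_zero, skewProduct_inj]

theorem skewProduct_mul_skewProduct (e e' : Equiv.Perm ι) (f f' : ι → A) :
    skewProduct e f * skewProduct e' f' = skewProduct (e * e') (f' + f ∘ e') := by
  ext v <;> simp [add_assoc]

theorem skewProduct_mul_skewReflection (e e' : Equiv.Perm ι) (f g : ι → A) :
    skewProduct e f * skewReflection e' g = skewReflection (e * e') (g + f ∘ e') := by
  ext v
  · simp
  · simp only [Equiv.Perm.mul_apply, skewProduct_apply, skewReflection_apply, Pi.add_apply,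
      Function.comp_apply]
    abel

theorem skewReflection_mul_skewProduct (e e' : Equiv.Perm ι) (g f : ι → A) :
    skewReflection e g * skewProduct e' f = skewReflection (e * e') (g ∘ e' - f) := by
  ext v
  · simp
  · simp only [Equiv.Perm.mul_apply, skewProduct_apply, skewReflection_apply, Pi.sub_apply,
      Function.comp_apply]
    abel

theorem skewReflection_mul_skewReflection (e e' : Equiv.Perm ι) (g g' : ι → A) :
    skewReflection e g * skewReflection e' g' = skewProduct (e * e') (g ∘ e' - g') := by
  ext v
  · simp
  · simp only [Equiv.Perm.mul_apply, skewProduct_apply, skewReflection_apply, Pi.sub_apply,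
      Function.comp_apply]
    abel

theorem skewProduct_pow (e : Equiv.Perm ι) (f : ι → A) (k : ℕ) :
    skewProduct e f ^ k = skewProduct (e ^ k) (birkhoffSum e f k) := by
  induction k with
  | zero => rw [pow_zero, pow_zero, birkhoffSum_zero', skewProduct_one_zero]
  | succ k ih =>
    rw [pow_succ', ih, skewProduct_mul_skewProduct, ← pow_succ', skewProduct_inj]
    refine ⟨rfl, funext fun i => ?_⟩
    rw [birkhoffSum_succ, Equiv.Perm.iterate_eq_pow]
    rfl

theorem skewProduct_one_pow (f : ι → A) (k : ℕ) :
    skewProduct (1 : Equiv.Perm ι) f ^ k = skewProduct 1 (k • f) := by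
  rw [skewProduct_pow, one_pow, birkhoffSum_of_comp_eq (by rfl)]

theorem orderOf_skewProduct_one (f : ι → A) :
    orderOf (skewProduct (1 : Equiv.Perm ι) f) = addOrderOf f := by
  rw [← Nat.dvd_right_iff_eq]
  intro k
  rw [orderOf_dvd_iff_pow_eq_one, addOrderOf_dvd_iff_nsmul_eq_zero, skewProduct_one_pow,
    skewProduct_eq_one_iff, and_iff_right rfl]

theorem skewProduct_pow_orderOf (e : Equiv.Perm ι) (f : ι → A) :
    skewProduct e f ^ orderOf e = skewProduct 1 (birkhoffSum e f (orderOf e)) := by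
  rw [skewProduct_pow, pow_orderOf_eq_one]

theorem orderOf_dvd_orderOf_skewProduct (e : Equiv.Perm ι) (f : ι → A) :
    orderOf e ∣ orderOf (skewProduct e f) := by
  have h := pow_orderOf_eq_one (skewProduct e f)
  rw [skewProduct_pow, skewProduct_eq_one_iff] at h
  exact orderOf_dvd_of_pow_eq_one h.1

theorem orderOf_skewProduct (e : Equiv.Perm ι) (f : ι → A) :
    orderOf (skewProduct e f) = orderOf e * addOrderOf (birkhoffSum e f (orderOf e)) := by
  have hdvd := orderOf_dvd_orderOf_skewProduct e f
  rcases eq_or_ne (orderOf e) 0 with he | he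
  · rw [he, zero_dvd_iff] at hdvd
    rw [he, hdvd, zero_mul]
  · rw [← orderOf_skewProduct_one, ← skewProduct_pow_orderOf, orderOf_pow_of_dvd he hdvd,
      Nat.mul_div_cancel' hdvd]

end SkewProduct

section CyclicSums

theorem addRight_pow {A : Type*} [AddGroup A] (a : A) (k : ℕ) :
    Equiv.addRight a ^ k = Equiv.addRight (k • a) := by
  ext x
  rw [← Equiv.Perm.iterate_eq_pow, Equiv.coe_addRight, add_right_iterate, Equiv.coe_addRight]

theorem addRight_pow_eq_one_iff {A : Type*} [AddGroup A] {a : A} {k : ℕ} :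
    Equiv.addRight a ^ k = 1 ↔ k • a = 0 := by
  rw [addRight_pow]
  exact ⟨fun h => by simpa using Equiv.congr_fun h 0, fun h => Equiv.ext fun x => by simp [h]⟩

theorem orderOf_addRight {A : Type*} [AddGroup A] (a : A) :
    orderOf (Equiv.addRight a) = addOrderOf a := by
  rw [← Nat.dvd_right_iff_eq]
  intro k
  rw [orderOf_dvd_iff_pow_eq_one, addOrderOf_dvd_iff_nsmul_eq_zero, addRight_pow_eq_one_iff]

theorem addOrderOf_eq_of_apply_eq_one {ι : Type*} {m : ℕ} {f : ι → ZMod m} {i : ι}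
    (hf : f i = 1) : addOrderOf f = m := by
  apply Nat.dvd_antisymm
  · apply addOrderOf_dvd_of_nsmul_eq_zero
    ext j
    simp
  · simpa [hf, ZMod.addOrderOf_one] using addOrderOf_apply_dvd_addOrderOf (x := f) i

variable {n : ℕ} [NeZero n] {A : Type*} [AddCommMonoid A]

theorem sum_range_natCast_zmod (f : ZMod n → A) :
    ∑ k ∈ Finset.range n, f k = ∑ x, f x :=
  Finset.sum_nbij' (fun k => (k : ZMod n)) ZMod.val (by simp)
    (by simpa using fun x => ZMod.val_lt x)
    (fun k hk => ZMod.val_cast_of_lt (Finset.mem_range.1 hk)) (by simp) (by simp)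

theorem birkhoffSum_addRight_one (f : ZMod n → A) :
    birkhoffSum (Equiv.addRight (1 : ZMod n)) f n = fun _ => ∑ x, f x := by
  funext i
  calc birkhoffSum (Equiv.addRight (1 : ZMod n)) f n i
      = ∑ k ∈ Finset.range n, f (i + k) := by
        simp [birkhoffSum, Equiv.coe_addRight, add_right_iterate]
    _ = ∑ x, f (i + x) := sum_range_natCast_zmod fun x => f (i + x)
    _ = ∑ x, f x := Equiv.sum_comp (Equiv.addLeft i) f

end CyclicSums

section EllFun

theorem two_mul_ellFun_add {R : Type*} [CommRing R] {r : ℕ} (hr : 1 ≤ r) :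
    2 * ((ellFun r : R) + if r = 1 then 1 else 0) = 2 + ((r : R) - 1) * ((r : R) - 2) := by
  rcases hr.eq_or_lt with rfl | hr
  · simp [ellFun]
  · obtain ⟨t, rfl⟩ : ∃ t, r = t + 2 := Nat.exists_eq_add_of_le' hr
    have heven : 2 * (t * (t + 1) / 2) = t * (t + 1) :=
      Nat.mul_div_cancel' (Nat.even_mul_succ_self t).two_dvd
    have hell : 2 * ellFun (t + 2) = 2 + t * (t + 1) := by
      rw [ellFun, if_neg (by omega), mul_add, ← heven]
      rfl
    have hcast := congrArg (Nat.cast : ℕ → R) hell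
    rw [if_neg (by omega)]
    push_cast at hcast ⊢
    linear_combination hcast

variable {n m : ℕ}

/-- The amount by which `σ₁` raises the second coordinate over `i`: it is `1` at `i = 1` and `0`
elsewhere. -/
def carry (n m : ℕ) : ZMod n → ZMod m := Pi.single 1 1

theorem carry_two_sub (i : ZMod n) : carry n m (2 - i) = carry n m i := by
  have hfix : 2 - i = 1 ↔ i = 1 := by grind
  simp only [carry, Pi.single_apply, hfix]

variable [NeZero n]

theorem zrep_pos (i : ZMod n) : 1 ≤ zrep i := by
  have := NeZero.pos n
  grind [zrep]

theorem natCast_zrep (i : ZMod n) : (zrep i : ZMod n) = i := by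
  rw [zrep]
  split_ifs with hi
  · rw [ZMod.natCast_self, (ZMod.val_eq_zero i).1 hi]
  · exact ZMod.natCast_zmod_val i

theorem zrep_eq_one_iff {i : ZMod n} : zrep i = 1 ↔ i = 1 := by
  refine ⟨fun h => by rw [← natCast_zrep i, h, Nat.cast_one], ?_⟩
  rintro rfl
  rcases eq_or_ne n 1 with rfl | hn
  · rfl
  · have : Fact (1 < n) := ⟨by have := NeZero.pos n; omega⟩
    simp [zrep, ZMod.val_one]

/-- The function `ℓ` on residues modulo `n`, with values taken modulo `m`. -/
def ellMod (n m : ℕ) (i : ZMod n) : ZMod m := ellFun (zrep i)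

theorem two_mul_ellMod_add_carry (hmn : m ∣ n) (i : ZMod n) :
    2 * (ellMod n m i + carry n m i) =
      2 + (ZMod.castHom hmn (ZMod m) i - 1) * (ZMod.castHom hmn (ZMod m) i - 2) := by
  have hcast : ZMod.castHom hmn (ZMod m) i = (zrep i : ZMod m) := by
    rw [← map_natCast (ZMod.castHom hmn (ZMod m)), natCast_zrep]
  simp only [hcast, ellMod, carry, Pi.single_apply, ← zrep_eq_one_iff,
    two_mul_ellFun_add (zrep_pos i)]

theorem isUnit_two_zmod (hm : Odd m) : IsUnit (2 : ZMod m) := by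
  simpa using (ZMod.isUnit_iff_coprime 2 m).2 (Nat.coprime_two_left.2 hm)

theorem ellMod_two_sub (hm : Odd m) (hmn : m ∣ n) (i : ZMod n) :
    ellMod n m (2 - i) - ellMod n m i = ZMod.castHom hmn (ZMod m) i - 1 := by
  apply (isUnit_two_zmod hm).mul_left_cancel
  have hi := two_mul_ellMod_add_carry hmn i
  have hi' := two_mul_ellMod_add_carry hmn (2 - i)
  rw [carry_two_sub, map_sub, map_ofNat] at hi'
  linear_combination hi' - hi

theorem ellMod_three_sub (hm : Odd m) (hmn : m ∣ n) (i : ZMod n) :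
    ellMod n m (3 - i) + carry n m (3 - i) = ellMod n m i + carry n m i := by
  apply (isUnit_two_zmod hm).mul_left_cancel
  rw [two_mul_ellMod_add_carry hmn, two_mul_ellMod_add_carry hmn, map_sub, map_ofNat]
  ring

end EllFun

section Generators

/-- The permutation `σ₁`. -/
def sigmaOne (n m : ℕ) : Equiv.Perm (ZMod n × ZMod m) :=
  skewProduct (Equiv.addRight 1) (carry n m)

/-- The permutation `σ₂`. -/
def sigmaTwo (n m : ℕ) : Equiv.Perm (ZMod n × ZMod m) :=
  skewReflection (Equiv.subLeft 2) fun i => 2 + ellMod n m i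

variable {n m : ℕ}

theorem sigmaOne_apply (i : ZMod n) (j : ZMod m) :
    sigmaOne n m (i, j) = if i = 1 then (i + 1, j + 1) else (i + 1, j) := by
  rcases eq_or_ne i 1 with rfl | hi <;> simp [sigmaOne, carry, *]

theorem sigmaTwo_apply (i : ZMod n) (j : ZMod m) :
    sigmaTwo n m (i, j) = (2 - i, 2 - j + (ellFun (zrep i) : ZMod m)) := by
  simp [sigmaTwo, ellMod, sub_add_eq_add_sub]

variable [NeZero n]

theorem birkhoffSum_carry :
    birkhoffSum (Equiv.addRight (1 : ZMod n)) (carry n m) n = 1 := by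
  rw [birkhoffSum_addRight_one]
  funext _
  simp [carry]

theorem sigmaOne_pow_self : sigmaOne n m ^ n = skewProduct 1 1 := by
  rw [sigmaOne, skewProduct_pow, birkhoffSum_carry, addRight_pow_eq_one_iff.2 (by simp)]

theorem orderOf_sigmaOne : orderOf (sigmaOne n m) = m * n := by
  rw [sigmaOne, orderOf_skewProduct, orderOf_addRight, ZMod.addOrderOf_one,
    birkhoffSum_carry, addOrderOf_eq_of_apply_eq_one (i := 0) rfl, mul_comm]

theorem sigmaOne_pow_eq_one_of_apply_eq {k : ℕ} {v : ZMod n × ZMod m}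
    (hv : (sigmaOne n m ^ k) v = v) : sigmaOne n m ^ k = 1 := by
  have hk : n ∣ k := by
    rw [sigmaOne, skewProduct_pow, addRight_pow, skewProduct_apply, Prod.ext_iff] at hv
    simpa [ZMod.natCast_eq_zero_iff] using hv.1
  obtain ⟨l, rfl⟩ := hk
  rw [pow_mul, sigmaOne_pow_self, skewProduct_one_pow] at hv ⊢
  have hl : (l : ZMod m) = 0 := by simpa using congrArg Prod.snd hv
  rw [skewProduct_eq_one_iff]
  exact ⟨rfl, funext fun _ => by simpa using hl⟩

theorem sigmaTwo_sq (hm : Odd m) (hmn : m ∣ n) :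
    sigmaTwo n m ^ 2 = skewProduct 1 fun i => ZMod.castHom hmn (ZMod m) i - 1 := by
  rw [sigmaTwo, pow_two, skewReflection_mul_skewReflection, skewProduct_inj]
  refine ⟨Equiv.ext fun i => by simp, funext fun i => ?_⟩
  rw [← ellMod_two_sub hm hmn]
  simp

theorem orderOf_sigmaTwo_sq (hm : Odd m) (hmn : m ∣ n) : orderOf (sigmaTwo n m ^ 2) = m := by
  rw [sigmaTwo_sq hm hmn, orderOf_skewProduct_one]
  apply addOrderOf_eq_of_apply_eq_one (i := 2)
  rw [map_ofNat]
  ring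

theorem sq_sigmaOne_mul_sigmaTwo (hm : Odd m) (hmn : m ∣ n) :
    (sigmaOne n m * sigmaTwo n m) ^ 2 = 1 := by
  rw [sigmaOne, sigmaTwo, skewProduct_mul_skewReflection, pow_two,
    skewReflection_mul_skewReflection, skewProduct_eq_one_iff]
  refine ⟨Equiv.ext fun i => by simp [sub_add_eq_sub_sub], funext fun i => ?_⟩
  have hbase : 2 - i + 1 = 3 - i := by ring
  have hell := ellMod_three_sub hm hmn i
  simp only [Pi.sub_apply, Pi.add_apply, Function.comp_apply, Equiv.Perm.mul_apply,
    Equiv.subLeft_apply, Equiv.coe_addRight, Pi.zero_apply, carry_two_sub, hbase]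
  linear_combination hell

theorem sigmaTwo_sq_conj_sigmaOne (hm : Odd m) (hmn : m ∣ n) :
    sigmaTwo n m ^ 2 * sigmaOne n m * (sigmaTwo n m ^ 2)⁻¹ = sigmaOne n m ^ (n + 1) := by
  rw [mul_inv_eq_iff_eq_mul, pow_succ (sigmaOne n m), sigmaOne_pow_self,
    sigmaTwo_sq hm hmn, sigmaOne]
  simp only [skewProduct_mul_skewProduct, skewProduct_inj, one_mul, mul_one, true_and]
  funext i
  simp only [Pi.add_apply, Function.comp_apply, Equiv.coe_addRight, map_add, map_one,
    Pi.one_apply, Equiv.Perm.one_apply]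
  ring

theorem disjoint_zpowers_sigmaTwo_sq_sigmaOne (hm : Odd m) (hmn : m ∣ n) :
    Disjoint (Subgroup.zpowers (sigmaTwo n m ^ 2)) (Subgroup.zpowers (sigmaOne n m)) := by
  have hfix : Subgroup.zpowers (sigmaTwo n m ^ 2) ≤
      MulAction.stabilizer (Equiv.Perm (ZMod n × ZMod m)) ((1, 0) : ZMod n × ZMod m) := by
    rw [Subgroup.zpowers_le, MulAction.mem_stabilizer_iff, sigmaTwo_sq hm hmn]
    simp [-ZMod.castHom_apply]
  have : NeZero m := ⟨hm.pos.ne'⟩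
  rw [Subgroup.disjoint_def]
  intro x hx₂ hx₁
  obtain ⟨k, rfl⟩ := mem_powers_iff_mem_zpowers.2 hx₁
  exact sigmaOne_pow_eq_one_of_apply_eq (hfix hx₂)

theorem not_commute_sigmaTwo_sigmaOne_pow (hm : 2 < m) :
    ¬ Commute (sigmaTwo n m) (sigmaOne n m ^ n) := by
  intro hcomm
  have : Fact (2 < m) := ⟨hm⟩
  rw [Commute, SemiconjBy, sigmaOne_pow_self, sigmaTwo, skewReflection_mul_skewProduct,
    skewProduct_mul_skewReflection, skewReflection_inj] at hcomm
  have hsigns := congrFun hcomm.2 0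
  apply ZMod.neg_one_ne_one (n := m)
  simpa [sub_eq_add_neg] using hsigns

theorem closure_sigmaTwo_sq_sigmaOne_le_centralizer (hm : Odd m) (hmn : m ∣ n) :
    Subgroup.closure {sigmaTwo n m ^ 2, sigmaOne n m} ≤
      Subgroup.centralizer {sigmaOne n m ^ n} := by
  simp only [Subgroup.closure_le, Set.insert_subset_iff, Set.singleton_subset_iff,
    SetLike.mem_coe, Subgroup.mem_centralizer_singleton_iff]
  refine ⟨?_, (Commute.self_pow _ n).eq⟩
  rw [sigmaOne_pow_self, sigmaTwo_sq hm hmn, skewProduct_mul_skewProduct,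
    skewProduct_mul_skewProduct]
  congr 1
  exact add_comm _ _

theorem sigmaTwo_notMem_closure (hm : Odd m) (hm' : 2 < m) (hmn : m ∣ n) :
    sigmaTwo n m ∉ Subgroup.closure {sigmaTwo n m ^ 2, sigmaOne n m} := fun h =>
  not_commute_sigmaTwo_sigmaOne_pow hm' <| Subgroup.mem_centralizer_singleton_iff.1 <|
    closure_sigmaTwo_sq_sigmaOne_le_centralizer hm hmn h

theorem orderOf_sigmaTwo (hm : Odd m) (hm' : 2 < m) (hmn : m ∣ n) :
    orderOf (sigmaTwo n m) = 2 * m := by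
  have hnotMem : sigmaTwo n m ∉ Subgroup.zpowers (sigmaTwo n m ^ 2) := fun h =>
    sigmaTwo_notMem_closure hm hm' hmn <|
      Subgroup.zpowers_le.2 (Subgroup.subset_closure (by simp)) h
  rw [orderOf_eq_prime_mul_orderOf_pow Nat.prime_two hnotMem, orderOf_sigmaTwo_sq hm hmn]

theorem card_closure_sigmaTwo_sq_sigmaOne (hm : Odd m) (hmn : m ∣ n) :
    Nat.card (Subgroup.closure {sigmaTwo n m ^ 2, sigmaOne n m}) = m * (m * n) := by
  have : NeZero m := ⟨hm.pos.ne'⟩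
  have hconj : sigmaTwo n m ^ 2 * sigmaOne n m * (sigmaTwo n m ^ 2)⁻¹ ∈
      Subgroup.zpowers (sigmaOne n m) :=
    sigmaTwo_sq_conj_sigmaOne hm hmn ▸ Subgroup.npow_mem_zpowers _ _
  rw [card_closure_pair_of_conj_mem hconj (disjoint_zpowers_sigmaTwo_sq_sigmaOne hm hmn),
    orderOf_sigmaTwo_sq hm hmn, orderOf_sigmaOne]

end Generators

theorem statement2
    (m s n : ℕ) (hm : 3 ≤ m) (hmo : Odd m) (hs : 0 < s) (hn : n = s * m)
    (σ₁ σ₂ : Equiv.Perm (ZMod n × ZMod m))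
    (hσ₁ : ∀ (i : ZMod n) (j : ZMod m),
      σ₁ (i, j) = if i = 1 then (i + 1, j + 1) else (i + 1, j))
    (hσ₂ : ∀ (i : ZMod n) (j : ZMod m),
      σ₂ (i, j) = (2 - i, 2 - j + (ellFun (zrep i) : ZMod m)))
    :
    orderOf σ₁ = m * n ∧ orderOf σ₂ = 2 * m ∧ orderOf (σ₁ * σ₂) = 2 ∧
      Nat.card (Subgroup.closure {σ₁, σ₂} : Subgroup (Equiv.Perm (ZMod n × ZMod m))) = 2 * m ^ 2 * n := by
  have hmn : m ∣ n := hn ▸ dvd_mul_left m s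
  have : NeZero m := ⟨by omega⟩
  have : NeZero n := ⟨by rw [hn]; positivity⟩
  obtain rfl : σ₁ = sigmaOne n m := Equiv.ext fun v => by rw [hσ₁, sigmaOne_apply]
  obtain rfl : σ₂ = sigmaTwo n m := Equiv.ext fun v => by rw [hσ₂, sigmaTwo_apply]
  have hsq := sq_sigmaOne_mul_sigmaTwo hmo hmn
  have hnotMem := sigmaTwo_notMem_closure hmo hm hmn
  refine ⟨orderOf_sigmaOne, orderOf_sigmaTwo hmo hm hmn,
    orderOf_mul_eq_two_of_notMem_closure_sq hsq hnotMem, ?_⟩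
  rw [card_closure_pair_of_sq_mul_eq_one hsq hnotMem, card_closure_sigmaTwo_sq_sigmaOne hmo hmn]
  ring
end

section
/- The permutation σ₂ fixes the vertex v = (1,1) of Γ, and the cyclic group ⟨σ₂⟩ acts transitively on the 2m neighbours of v. -/
/-!
`σ₂` swaps the two fibres `{0} × ZMod m` and `{2} × ZMod m`, whose union is the neighbourhood of
`(1, 1)`, and its square translates the fibre over `0` by `ℓ(2) - ℓ(n)`. As `m ∣ n` and `2` is
invertible modulo `m`, `ℓ(n) ≡ 2`, while `ℓ(2) = 1`. So the translation is by `-1`, which generates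
`ZMod m`.
-/

/-- The map `(i, j) ↦ (a - i, b - j + ℓ i)`: a reflection of the base `A` covered by reflections of
the fibres `B`, twisted by `ℓ`. The map `σ₂` of the theorem has this form with `a = b = 2`. It is a
predicate on `σ` since the theorem specifies `σ₂` by its values. -/
def IsTwistedReflection {A B : Type*} [AddCommGroup A] [AddCommGroup B]
    (a : A) (b : B) (ℓ : A → B) (σ : Equiv.Perm (A × B)) : Prop :=
  ∀ i j, σ (i, j) = (a - i, b - j + ℓ i)

namespace IsTwistedReflection

variable {A B : Type*} [AddCommGroup A] [AddCommGroup B] {a i : A} {b : B} {ℓ : A → B}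
  {σ : Equiv.Perm (A × B)}

theorem apply_apply (hσ : IsTwistedReflection a b ℓ σ) (i : A) (j : B) :
    σ (σ (i, j)) = (i, j + (ℓ (a - i) - ℓ i)) := by
  rw [hσ, hσ]
  ext
  · exact sub_sub_cancel a i
  · dsimp only
    abel

theorem sq_zpow_apply (hσ : IsTwistedReflection a b ℓ σ) (k : ℤ) (i : A) (j : B) :
    ((σ ^ 2) ^ k) (i, j) = (i, j + k • (ℓ (a - i) - ℓ i)) := by
  have sq_apply (j : B) : (σ ^ 2) (i, j) = (i, j + (ℓ (a - i) - ℓ i)) := by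
    rw [sq, Equiv.Perm.mul_apply, hσ.apply_apply]
  induction k generalizing j with
  | zero => simp
  | succ k ih =>
    rw [zpow_add_one, Equiv.Perm.mul_apply, sq_apply, ih, add_one_zsmul]
    congr 1
    abel
  | pred k ih =>
    have inv_sq_apply : (σ ^ 2)⁻¹ (i, j) = (i, j - (ℓ (a - i) - ℓ i)) := by
      rw [Equiv.Perm.inv_eq_iff_eq, sq_apply, sub_add_cancel]
    rw [zpow_sub_one, Equiv.Perm.mul_apply, inv_sq_apply, ih, sub_one_zsmul]
    congr 1
    abel

theorem sameCycle_of_fst_eq (hσ : IsTwistedReflection a b ℓ σ)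
    (hgen : ∀ x, x ∈ AddSubgroup.zmultiples (ℓ (a - i) - ℓ i)) {p q : A × B}
    (hp : p.1 = i) (hq : q.1 = i) : σ.SameCycle p q := by
  obtain ⟨_, j⟩ := p
  obtain ⟨_, j'⟩ := q
  dsimp only at hp hq
  rw [hp, hq]
  obtain ⟨k, hk⟩ := AddSubgroup.mem_zmultiples_iff.mp (hgen (j' - j))
  have sq_zpow_eq : ((σ ^ 2) ^ k) (i, j) = (i, j') := by
    rw [hσ.sq_zpow_apply, hk, add_sub_cancel]
  exact Equiv.Perm.SameCycle.of_pow ⟨k, sq_zpow_eq⟩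

theorem sameCycle_of_fst_eq_or (hσ : IsTwistedReflection a b ℓ σ)
    (hgen : ∀ x, x ∈ AddSubgroup.zmultiples (ℓ (a - i) - ℓ i)) {p q : A × B}
    (hp : p.1 = i ∨ p.1 = a - i) (hq : q.1 = i ∨ q.1 = a - i) : σ.SameCycle p q := by
  have sameCycle_base {r : A × B} (hr : r.1 = i ∨ r.1 = a - i) : σ.SameCycle r (i, 0) := by
    rcases hr with hr | hr
    · exact hσ.sameCycle_of_fst_eq hgen hr rfl
    · have apply_fst : (σ r).1 = i := by
        rw [← Prod.mk.eta (p := r), hσ, hr, sub_sub_cancel]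
      exact Equiv.Perm.sameCycle_apply_left.mp (hσ.sameCycle_of_fst_eq hgen apply_fst rfl)
  exact (sameCycle_base hp).trans (sameCycle_base hq).symm

end IsTwistedReflection

theorem fst_eq_of_lexCycle_adj {n m : ℕ} {u v : ZMod n × ZMod m} (h : (lexCycle n m).Adj u v) :
    v.1 = u.1 - 1 ∨ v.1 = u.1 + 1 :=
  ((SimpleGraph.fromRel_adj _ u v).mp h).2.symm.imp_left fun h' => eq_sub_of_add_eq h'.symm

theorem mem_zmultiples_of_isUnit {m : ℕ} {d : ZMod m} (hd : IsUnit d) (x : ZMod m) :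
    x ∈ AddSubgroup.zmultiples d := by
  obtain ⟨c, rfl⟩ := hd.dvd (a := x)
  obtain ⟨k, rfl⟩ := ZMod.intCast_surjective c
  exact AddSubgroup.mem_zmultiples_iff.mpr ⟨k, by rw [zsmul_eq_mul, mul_comm]⟩

theorem zrep_natCast {n i : ℕ} (hi : 0 < i) (hin : i ≤ n) : zrep (i : ZMod n) = i := by
  unfold zrep
  rcases hin.eq_or_lt with rfl | hlt
  · simp
  · rw [ZMod.val_natCast_of_lt hlt, if_neg hi.ne']

theorem two_mul_ellFun {R : Type*} [CommRing R] {i : ℕ} (hi : 2 ≤ i) :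
    2 * (ellFun i : R) = i ^ 2 - 3 * i + 4 := by
  obtain ⟨t, rfl⟩ := Nat.exists_eq_add_of_le' hi
  have h_nat : 2 * ellFun (t + 2) = 2 + t * (t + 1) := by
    have two_dvd : 2 ∣ t * (t + 1) := (Nat.even_mul_succ_self t).two_dvd
    have ellFun_eq : ellFun (t + 2) = 1 + t * (t + 1) / 2 := if_neg (by lia)
    rw [ellFun_eq, mul_add, Nat.mul_div_cancel' two_dvd]
  have h_cast := congrArg (Nat.cast (R := R)) h_nat
  push_cast at h_cast ⊢
  linear_combination h_cast

theorem ellFun_eq_two_of_dvd {m i : ℕ} (hm : Odd m) (hi : 2 ≤ i) (hmi : m ∣ i) :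
    (ellFun i : ZMod m) = 2 := by
  have isUnit_two : IsUnit (2 : ZMod m) :=
    (ZMod.isUnit_iff_coprime 2 m).mpr (Nat.coprime_two_left.mpr hm)
  have cast_eq_zero : (i : ZMod m) = 0 := (ZMod.natCast_eq_zero_iff i m).mpr hmi
  refine isUnit_two.mul_left_cancel ?_
  rw [two_mul_ellFun hi, cast_eq_zero]
  ring

theorem ellFun_zrep_one {n : ℕ} (hn : 0 < n) : ellFun (zrep (1 : ZMod n)) = 0 := by
  rw [← Nat.cast_one, zrep_natCast one_pos hn]
  rfl

theorem ellFun_zrep_two {n : ℕ} (hn : 2 ≤ n) : ellFun (zrep (2 : ZMod n)) = 1 := by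
  rw [← Nat.cast_ofNat, zrep_natCast two_pos hn]
  rfl

theorem ellFun_zrep_zero {m n : ℕ} (hm : Odd m) (hn : 2 ≤ n) (hmn : m ∣ n) :
    (ellFun (zrep (0 : ZMod n)) : ZMod m) = 2 := by
  rw [← ZMod.natCast_self n, zrep_natCast (by lia) le_rfl, ellFun_eq_two_of_dvd hm hn hmn]

theorem isUnit_ellFun_two_sub_zero {m n : ℕ} (hm : Odd m) (hn : 2 ≤ n) (hmn : m ∣ n) :
    IsUnit ((ellFun (zrep (2 : ZMod n)) : ZMod m) - ellFun (zrep (0 : ZMod n))) := by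
  have diff_eq : ((1 : ℕ) : ZMod m) - 2 = -1 := by
    push_cast
    ring
  rw [ellFun_zrep_two hn, ellFun_zrep_zero hm hn hmn, diff_eq]
  exact isUnit_one.neg

theorem statement3_general {n m : ℕ} {ℓ : ZMod n → ZMod m} {σ : Equiv.Perm (ZMod n × ZMod m)}
    (hσ : IsTwistedReflection 2 2 ℓ σ) (h_one : ℓ 1 = 0) (h_unit : IsUnit (ℓ 2 - ℓ 0)) :
    σ (1, 1) = (1, 1) ∧ ∀ w w', (lexCycle n m).Adj (1, 1) w → (lexCycle n m).Adj (1, 1) w' →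
      ∃ k : ℤ, (σ ^ k) w = w' := by
  have hgen (x : ZMod m) : x ∈ AddSubgroup.zmultiples (ℓ (2 - 0) - ℓ 0) := by
    rw [sub_zero]
    exact mem_zmultiples_of_isUnit h_unit x
  have fst_eq {w : ZMod n × ZMod m} (hw : (lexCycle n m).Adj (1, 1) w) :
      w.1 = 0 ∨ w.1 = 2 - 0 := by
    simpa only [sub_self, one_add_one_eq_two, sub_zero] using fst_eq_of_lexCycle_adj hw
  refine ⟨?_, fun w w' hw hw' => hσ.sameCycle_of_fst_eq_or hgen (fst_eq hw) (fst_eq hw')⟩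
  rw [hσ, h_one, add_zero, ← one_add_one_eq_two, ← one_add_one_eq_two, add_sub_cancel_right,
    add_sub_cancel_right]

theorem statement3
    (m s n : ℕ) (hm : 3 ≤ m) (hmo : Odd m) (hs : 0 < s) (hn : n = s * m)
    (σ₂ : Equiv.Perm (ZMod n × ZMod m))
    (hσ₂ : ∀ (i : ZMod n) (j : ZMod m),
      σ₂ (i, j) = (2 - i, 2 - j + (ellFun (zrep i) : ZMod m)))
    :
    σ₂ ((1, 1) : ZMod n × ZMod m) = (1, 1) ∧
      (∀ w w' : ZMod n × ZMod m,
        (lexCycle n m).Adj ((1, 1) : ZMod n × ZMod m) w →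
        (lexCycle n m).Adj ((1, 1) : ZMod n × ZMod m) w' →
        ∃ k : ℤ, (σ₂ ^ k) w = w') := by
  have two_le_n : 2 ≤ n := by nlinarith
  exact statement3_general hσ₂ (by rw [ellFun_zrep_one (by lia), Nat.cast_zero])
    (isUnit_ellFun_two_sub_zero hmo two_le_n ⟨s, by rw [hn, mul_comm]⟩)
end

section
/- The subgroup G = ⟨σ₁, σ₂⟩ of the automorphism group of Γ acts transitively on the arcs of Γ, and the stabiliser in G of each arc is trivial; that is, G acts simply transitively on the 2m²n arcs of Γ. -/
/-!
Sending `(i, j)` to `n j - d`, where `d ∈ {0, …, n - 1}` represents `1 - i`, identifies the vertices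
with `R = ZMod (n * m)`, and arcs become pairs whose difference is `±1` modulo `n`. As `m` is odd
and divides `n`, there is `η ∈ R` with `2 η = n` and `η ^ 2 = 0`; under the identification `σ₁`
becomes `x ↦ x + 1` and `σ₂` becomes `x ↦ -x + 4 η + η x (x - 1)`. The maps
`x ↦ (1 + 2 η b) x + a` and `x ↦ (-1 + 2 η b) x + a + η x (x - 1)` are closed under composition, so
every element of `G` acts by one of them. Subtracting the two fixed point equations, a map of the
first kind fixing an arc is the identity, and one of the second kind would force `η ∣ 2`, impossible
for `n ≥ 3`. Conversely `σ₂ ^ 2` is multiplication by `1 + n`, so `G` contains every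
`x ↦ (1 + n b) x + a`; these together with `σ₂` carry the arc `(0, 1)` to any other.
-/

section QuadraticMaps

variable {R : Type*} [CommRing R] {η a a' b b' x y : R}

/-- The affine map with linear coefficient congruent to `1` modulo `2 * η`. For `η ^ 2 = 0` these
maps form the rotation part of the group generated by `σ₁` and `σ₂`. -/
def shear (η a b x : R) : R := (1 + 2 * η * b) * x + a

/-- The quadratic maps forming the reflection part of the group generated by `σ₁` and `σ₂`. -/
def twist (η a b x : R) : R := (-1 + 2 * η * b) * x + a + η * (x * (x - 1))

/-- A map that is a `shear` or a `twist`. -/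
def IsShearOrTwist (η : R) (f : R → R) : Prop :=
  ∃ a b, f = shear η a b ∨ f = twist η a b

/-- The labels `x` and `y` differ by `±1` modulo `2 * η`. This is adjacency in `lexCycle`,
expressed through vertex labels. -/
def IsUnitStep (η x y : R) : Prop := 2 * η ∣ y - x - 1 ∨ 2 * η ∣ x - y - 1

theorem shear_zero_zero : shear η 0 0 = id := by
  funext x
  simp [shear]

theorem shear_comp_shear (hη : η ^ 2 = 0) :
    shear η a b ∘ shear η a' b' = shear η (a + (1 + 2 * η * b) * a') (b + b') := by
  funext x
  simp only [Function.comp_apply, shear]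
  linear_combination 4 * b * b' * x * hη

theorem shear_comp_twist (hη : η ^ 2 = 0) :
    shear η a b ∘ twist η a' b' = twist η (a + (1 + 2 * η * b) * a') (b' - b) := by
  funext x
  simp only [Function.comp_apply, shear, twist]
  linear_combination (4 * b * b' * x + 2 * b * x * (x - 1)) * hη

theorem mul_quadratic_add_mul (hη : η ^ 2 = 0) (x y : R) :
    η * ((x + η * y) * (x + η * y - 1)) = η * (x * (x - 1)) := by
  linear_combination (2 * x * y + η * y ^ 2 - y) * hη

theorem twist_comp_shear (hη : η ^ 2 = 0) :
    twist η a b ∘ shear η a' b' =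
      twist η (a - a' + 2 * η * b * a' + η * (a' * (a' - 1))) (a' + b - b') := by
  funext x
  have hquad := mul_quadratic_add_mul hη (x + a') (2 * b' * x)
  simp only [Function.comp_apply, shear, twist]
  linear_combination hquad + 4 * b * b' * x * hη

theorem twist_comp_twist (hη : η ^ 2 = 0) :
    twist η a b ∘ twist η a' b' =
      shear η (a - a' + 2 * η * b * a' + η * (a' * (a' - 1))) (1 - a' - b - b') := by
  funext x
  have hquad := mul_quadratic_add_mul hη (a' - x) (2 * b' * x + x * (x - 1))
  simp only [Function.comp_apply, shear, twist]
  linear_combination hquad + (4 * b * b' * x + 2 * b * x * (x - 1)) * hη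

theorem IsShearOrTwist.id (η : R) : IsShearOrTwist η id :=
  ⟨0, 0, .inl shear_zero_zero.symm⟩

theorem IsShearOrTwist.comp (hη : η ^ 2 = 0) {f g : R → R}
    (hf : IsShearOrTwist η f) (hg : IsShearOrTwist η g) : IsShearOrTwist η (f ∘ g) := by
  obtain ⟨a, b, rfl | rfl⟩ := hf <;> obtain ⟨a', b', rfl | rfl⟩ := hg
  · exact ⟨_, _, .inl (shear_comp_shear hη)⟩
  · exact ⟨_, _, .inr (shear_comp_twist hη)⟩
  · exact ⟨_, _, .inr (twist_comp_shear hη)⟩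
  · exact ⟨_, _, .inl (twist_comp_twist hη)⟩

theorem iterate_shear_one_zero (k : ℕ) : (shear η 1 0)^[k] = shear η k 0 := by
  have htranslate (a : R) : shear η a 0 = (· + a) := by
    funext x
    simp [shear]
  rw [htranslate, htranslate, add_right_iterate, nsmul_one]

theorem iterate_shear_zero_one (hη : η ^ 2 = 0) (k : ℕ) :
    (shear η 0 1)^[k] = shear η 0 k := by
  induction k with
  | zero => simp [shear_zero_zero]
  | succ k ih => rw [Function.iterate_succ, ih, shear_comp_shear hη]; simp

theorem shear_eq_id_of_fixed (hη : η ^ 2 = 0) (hxy : IsUnitStep η x y)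
    (hx : shear η a b x = x) (hy : shear η a b y = y) : shear η a b = id := by
  simp only [shear] at hx hy
  have hb : 2 * η * b = 0 := by
    obtain ⟨t, ht⟩ | ⟨t, ht⟩ := hxy
    · linear_combination hy - hx - 2 * η * b * ht - 4 * b * t * hη
    · linear_combination hx - hy - 2 * η * b * ht - 4 * b * t * hη
  have ha : a = 0 := by linear_combination hx - x * hb
  funext z
  simp [shear, ha, hb]

theorem dvd_two_of_twist_fixed (hxy : IsUnitStep η x y)
    (hx : twist η a b x = x) (hy : twist η a b y = y) : η ∣ 2 := by
  simp only [twist] at hx hy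
  have hdiff : η ∣ 2 * (y - x) :=
    ⟨2 * b * (y - x) + y * (y - 1) - x * (x - 1), by linear_combination hx - hy⟩
  obtain ⟨c, hc⟩ := hdiff
  obtain ⟨t, ht⟩ | ⟨t, ht⟩ := hxy
  · exact ⟨c - 4 * t, by linear_combination hc - 2 * ht⟩
  · exact ⟨-c - 4 * t, by linear_combination -hc - 2 * ht⟩

theorem IsShearOrTwist.eq_id_of_fixed (hη : η ^ 2 = 0) (hη2 : ¬ η ∣ 2) {f : R → R}
    (hf : IsShearOrTwist η f) (hxy : IsUnitStep η x y) (hx : f x = x) (hy : f y = y) :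
    f = _root_.id := by
  obtain ⟨a, b, rfl | rfl⟩ := hf
  · exact shear_eq_id_of_fixed hη hxy hx hy
  · exact absurd (dvd_two_of_twist_fixed hxy hx hy) hη2

theorem IsUnitStep.exists_shear_or_shear_comp_twist (hη : η ^ 2 = 0) (hxy : IsUnitStep η x y) :
    ∃ a b f, (f = shear η a b ∨ f = shear η a b ∘ twist η (4 * η) 0) ∧ f 0 = x ∧ f 1 = y := by
  obtain ⟨t, ht⟩ | ⟨t, ht⟩ := hxy
  · refine ⟨x, t, _, .inl rfl, ?_, ?_⟩ <;> simp only [shear]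
    · ring
    · linear_combination -ht
  · refine ⟨x - 4 * η, t, _, .inr rfl, ?_, ?_⟩ <;> simp only [Function.comp_apply, shear, twist]
    · linear_combination 8 * t * hη
    · linear_combination ht + 8 * t * hη

end QuadraticMaps

section Closure

open Function (Semiconj)

theorem semiconj_perm_mul {V R : Type*} {label : V → R} {g h : Equiv.Perm V} {f k : R → R}
    (hg : Semiconj label g f) (hh : Semiconj label h k) : Semiconj label (g * h) (f ∘ k) := by
  simpa only [Equiv.Perm.coe_mul] using hg.comp_right hh

theorem semiconj_perm_pow {V R : Type*} {label : V → R} {g : Equiv.Perm V} {f : R → R}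
    (hg : Semiconj label g f) (k : ℕ) : Semiconj label ↑(g ^ k) f^[k] := by
  simpa only [Equiv.Perm.iterate_eq_pow] using hg.iterate_right k

variable {V R : Type*} [CommRing R] {η : R} {label : V → R} {σ₁ σ₂ : Equiv.Perm V}

theorem exists_isShearOrTwist_of_mem_closure [Finite V] (hη : η ^ 2 = 0) {S : Set (Equiv.Perm V)}
    (hS : ∀ σ ∈ S, ∃ f, IsShearOrTwist η f ∧ Semiconj label σ f)
    {g : Equiv.Perm V} (hg : g ∈ Subgroup.closure S) :
    ∃ f, IsShearOrTwist η f ∧ Semiconj label g f := by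
  rw [← Subgroup.mem_toSubmonoid, Subgroup.closure_toSubmonoid_of_finite] at hg
  induction hg using Submonoid.closure_induction with
  | mem σ hσ => exact hS σ hσ
  | one => exact ⟨id, .id η, fun _ => rfl⟩
  | mul g h _ _ ihg ihh =>
    obtain ⟨f, hf, hgf⟩ := ihg
    obtain ⟨k, hk, hhk⟩ := ihh
    exact ⟨f ∘ k, hf.comp hη hk, semiconj_perm_mul hgf hhk⟩

theorem eq_one_of_mem_closure_of_fixed [Finite V] (hη : η ^ 2 = 0) (hη2 : ¬ η ∣ 2)
    (hlabel : Function.Injective label) {S : Set (Equiv.Perm V)}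
    (hS : ∀ σ ∈ S, ∃ f, IsShearOrTwist η f ∧ Semiconj label σ f)
    {g : Equiv.Perm V} (hg : g ∈ Subgroup.closure S) {u w : V}
    (huw : IsUnitStep η (label u) (label w)) (hu : g u = u) (hw : g w = w) : g = 1 := by
  obtain ⟨f, hf, hgf⟩ := exists_isShearOrTwist_of_mem_closure hη hS hg
  obtain rfl : f = id :=
    hf.eq_id_of_fixed hη hη2 huw (by rw [← hgf.eq, hu]) (by rw [← hgf.eq, hw])
  ext1 v
  exact hlabel (hgf v)

theorem semiconj_twist_sq (hη : η ^ 2 = 0) (h₂ : Semiconj label σ₂ (twist η (4 * η) 0)) :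
    Semiconj label ↑(σ₂ ^ 2) (shear η 0 1) := by
  have hsq : twist η (4 * η) 0 ∘ twist η (4 * η) 0 = shear η 0 1 := by
    funext x
    rw [twist_comp_twist hη, shear, shear]
    linear_combination (16 * η - 4 - 8 * x) * hη
  rw [← hsq, sq]
  exact semiconj_perm_mul h₂ h₂

theorem exists_mem_closure_semiconj_shear (hη : η ^ 2 = 0)
    (hR : Function.Surjective (Nat.cast : ℕ → R)) (h₁ : Semiconj label σ₁ (shear η 1 0))
    (h₂ : Semiconj label σ₂ (twist η (4 * η) 0)) (a b : R) :
    ∃ g ∈ Subgroup.closure {σ₁, σ₂}, Semiconj label g (shear η a b) := by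
  obtain ⟨k, rfl⟩ := hR a
  obtain ⟨l, rfl⟩ := hR b
  have hmem₁ : σ₁ ∈ Subgroup.closure {σ₁, σ₂} := Subgroup.subset_closure (by simp)
  have hmem₂ : σ₂ ∈ Subgroup.closure {σ₁, σ₂} := Subgroup.subset_closure (by simp)
  refine ⟨σ₁ ^ k * (σ₂ ^ 2) ^ l, mul_mem (pow_mem hmem₁ k) (pow_mem (pow_mem hmem₂ 2) l), ?_⟩
  have hpow₁ := semiconj_perm_pow h₁ k
  have hpow₂ := semiconj_perm_pow (semiconj_twist_sq hη h₂) l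
  rw [iterate_shear_one_zero] at hpow₁
  rw [iterate_shear_zero_one hη] at hpow₂
  simpa only [shear_comp_shear hη, mul_zero, add_zero, zero_add] using
    semiconj_perm_mul hpow₁ hpow₂

theorem exists_mem_closure_map_eq (hη : η ^ 2 = 0)
    (hR : Function.Surjective (Nat.cast : ℕ → R)) (hlabel : Function.Injective label)
    (h₁ : Semiconj label σ₁ (shear η 1 0)) (h₂ : Semiconj label σ₂ (twist η (4 * η) 0))
    {v₀ v₁ u w : V} (hv₀ : label v₀ = 0) (hv₁ : label v₁ = 1)
    (huw : IsUnitStep η (label u) (label w)) :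
    ∃ g ∈ Subgroup.closure {σ₁, σ₂}, g v₀ = u ∧ g v₁ = w := by
  obtain ⟨a, b, f, hf, hfu, hfw⟩ := huw.exists_shear_or_shear_comp_twist hη
  obtain ⟨g, hg, hgf⟩ : ∃ g ∈ Subgroup.closure {σ₁, σ₂}, Semiconj label g f := by
    obtain ⟨g, hg, hgf⟩ := exists_mem_closure_semiconj_shear hη hR h₁ h₂ a b
    obtain rfl | rfl := hf
    · exact ⟨g, hg, hgf⟩
    · exact ⟨g * σ₂, mul_mem hg (Subgroup.subset_closure (by simp)), semiconj_perm_mul hgf h₂⟩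
  exact ⟨g, hg, hlabel (by rw [hgf.eq, hv₀, hfu]), hlabel (by rw [hgf.eq, hv₁, hfw])⟩

end Closure

section ZModMul

variable {n m : ℕ}

/-- Reduction of `ZMod (n * m)` modulo `n`. -/
def reduceMod (n m : ℕ) : ZMod (n * m) →+* ZMod n :=
  ZMod.castHom (dvd_mul_right n m) (ZMod n)

/-- Multiplication by `n`, as a homomorphism embedding `ZMod m` into `ZMod (n * m)`. -/
def natMulHom (n m : ℕ) : ZMod m →+ ZMod (n * m) :=
  ZMod.lift m ⟨zmultiplesHom _ (n : ZMod (n * m)), by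
    rw [zmultiplesHom_apply, natCast_zsmul, nsmul_eq_mul, mul_comm, ← Nat.cast_mul,
      ZMod.natCast_self]⟩

/-- A square-zero half of `n` in `ZMod (n * m)`, for `m` an odd divisor of `n`. -/
def halfNat (n m : ℕ) : ZMod (n * m) := n * ((m + 1) / 2 : ℕ)

theorem natMulHom_intCast (n m : ℕ) (k : ℤ) : natMulHom n m k = n * k := by
  simp [natMulHom, mul_comm]

theorem natMulHom_natCast (n m k : ℕ) : natMulHom n m k = n * k := by
  exact_mod_cast natMulHom_intCast n m k

theorem natMulHom_injective (hn : n ≠ 0) : Function.Injective (natMulHom n m) := by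
  rw [injective_iff_map_eq_zero]
  intro x hx
  obtain ⟨k, rfl⟩ := ZMod.intCast_surjective x
  have hdvd : ((n * m : ℕ) : ℤ) ∣ n * k := by
    rw [← ZMod.intCast_zmod_eq_zero_iff_dvd]
    simpa [natMulHom_intCast] using hx
  rw [ZMod.intCast_zmod_eq_zero_iff_dvd]
  exact Int.dvd_of_mul_dvd_mul_left (Nat.cast_ne_zero.2 hn) (by exact_mod_cast hdvd)

theorem reduceMod_natMulHom (x : ZMod m) : reduceMod n m (natMulHom n m x) = 0 := by
  obtain ⟨k, rfl⟩ := ZMod.intCast_surjective x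
  simp [natMulHom_intCast]

theorem reduceMod_cast [NeZero n] (i : ZMod n) : reduceMod n m i.cast = i := by
  rw [← ZMod.natCast_val, map_natCast, ZMod.natCast_zmod_val]

theorem natCast_dvd_of_reduceMod_eq_zero {x : ZMod (n * m)} (hx : reduceMod n m x = 0) :
    (n : ZMod (n * m)) ∣ x := by
  obtain ⟨k, rfl⟩ := ZMod.intCast_surjective x
  rw [map_intCast, ZMod.intCast_zmod_eq_zero_iff_dvd] at hx
  simpa using map_dvd (Int.castRingHom (ZMod (n * m))) hx

theorem two_mul_halfNat (hm : Odd m) : 2 * halfNat n m = n := by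
  have hhalf : 2 * (n * ((m + 1) / 2)) = n * m + n := by
    rw [mul_left_comm, Nat.two_mul_div_two_of_even hm.add_one, mul_add_one]
  have hcast := congrArg (Nat.cast : ℕ → ZMod (n * m)) hhalf
  rwa [Nat.cast_add, ZMod.natCast_self, zero_add, Nat.cast_mul, Nat.cast_mul] at hcast

theorem halfNat_mul_natCast (hmn : m ∣ n) : halfNat n m * n = 0 := by
  have hsq : (n * n : ZMod (n * m)) = 0 := by
    exact_mod_cast (ZMod.natCast_eq_zero_iff _ _).2 (mul_dvd_mul_left n hmn)
  rw [halfNat, mul_right_comm, hsq, zero_mul]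

theorem halfNat_sq (hmn : m ∣ n) : halfNat n m ^ 2 = 0 := by
  rw [sq]
  nth_rw 2 [halfNat]
  rw [← mul_assoc, halfNat_mul_natCast hmn, zero_mul]

theorem not_halfNat_dvd_two (hn : 3 ≤ n) : ¬ halfNat n m ∣ 2 := by
  intro h
  have htwo : ((2 : ℕ) : ZMod n) = 0 := by
    rw [Nat.cast_ofNat]
    simpa only [halfNat, map_mul, map_natCast, ZMod.natCast_self, zero_mul, zero_dvd_iff,
      map_ofNat] using map_dvd (reduceMod n m) h
  have := Nat.le_of_dvd two_pos ((ZMod.natCast_eq_zero_iff _ _).1 htwo)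
  omega

theorem halfNat_mul_eq_of_reduceMod_eq (hmn : m ∣ n) {x y : ZMod (n * m)}
    (h : reduceMod n m x = reduceMod n m y) : halfNat n m * x = halfNat n m * y := by
  have hsub : reduceMod n m (x - y) = 0 := by rw [map_sub, h, sub_self]
  obtain ⟨t, ht⟩ := natCast_dvd_of_reduceMod_eq_zero hsub
  linear_combination halfNat n m * ht + t * halfNat_mul_natCast hmn

end ZModMul

section EllFun

theorem two_mul_ellFun_add_two (r : ℕ) : 2 * ellFun (r + 2) = 2 + r * (r + 1) := by
  have heven : 2 * (r * (r + 1) / 2) = r * (r + 1) :=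
    Nat.two_mul_div_two_of_even (Nat.even_mul_succ_self r)
  have hell : ellFun (r + 2) = 1 + r * (r + 1) / 2 := by simp [ellFun]
  rw [hell, mul_add, heven]

variable {n : ℕ} [NeZero n]

theorem zrep_eq_val_sub_one_add_one (i : ZMod n) : zrep i = (i - 1).val + 1 := by
  have hi : ((i - 1).val + 1 : ℕ) = i := by simp
  conv_lhs => rw [zrep, ← hi, ZMod.val_natCast]
  obtain hlt | heq := (Nat.succ_le_of_lt (i - 1).val_lt).lt_or_eq
  · rw [Nat.mod_eq_of_lt hlt, if_neg (Nat.succ_ne_zero _)]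
  · rw [← Nat.succ_eq_add_one, heq, Nat.mod_self, if_pos rfl]

theorem cast_add_cast_neg {R : Type*} [Ring R] {i : ZMod n} (hi : i ≠ 0) :
    (i.cast + (-i).cast : R) = n := by
  have hval : i.val + (-i).val = n := by
    rw [ZMod.neg_val, if_neg hi, Nat.add_sub_cancel' i.val_lt.le]
  simpa only [Nat.cast_add, ZMod.natCast_val] using congrArg (Nat.cast : ℕ → R) hval

theorem natCast_mul_ellFun_zrep {m : ℕ} (hm : Odd m) (i : ZMod n) :
    (n * ellFun (zrep i) : ZMod (n * m)) =
      (i - 1).cast + (1 - i).cast + halfNat n m * ((i - 1).cast * ((i - 1).cast - 1)) := by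
  obtain rfl | hi := eq_or_ne i 1
  · simp [zrep_eq_val_sub_one_add_one, ellFun]
  obtain ⟨r, hr⟩ := Nat.exists_eq_succ_of_ne_zero
    ((ZMod.val_ne_zero (i - 1)).2 (sub_ne_zero.2 hi))
  have hsum : ((i - 1).cast + (1 - i).cast : ZMod (n * m)) = n := by
    rw [← neg_sub i 1, cast_add_cast_neg (sub_ne_zero.2 hi)]
  have hcast : ((i - 1).cast : ZMod (n * m)) = r + 1 := by
    rw [← ZMod.natCast_val, hr, Nat.cast_succ]
  have hell : (2 * ellFun (r + 2) : ZMod (n * m)) = 2 + r * (r + 1) := by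
    exact_mod_cast congrArg (Nat.cast : ℕ → ZMod (n * m)) (two_mul_ellFun_add_two r)
  rw [hsum, hcast, zrep_eq_val_sub_one_add_one, hr]
  linear_combination halfNat n m * hell - (ellFun (r + 2) - 1) * two_mul_halfNat (n := n) hm

end EllFun

namespace lexCycle

open Function (Semiconj)

variable {n m : ℕ}

/-- The identification of the vertices of `lexCycle n m` with `ZMod (n * m)` in which `σ₁` becomes
the translation by `1`. -/
def label (v : ZMod n × ZMod m) : ZMod (n * m) := natMulHom n m v.2 - (1 - v.1).cast

theorem reduceMod_label [NeZero n] (v : ZMod n × ZMod m) :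
    reduceMod n m (label v) = v.1 - 1 := by
  rw [label, map_sub, reduceMod_natMulHom, reduceMod_cast]
  ring

theorem label_injective [NeZero n] :
    Function.Injective (label : ZMod n × ZMod m → ZMod (n * m)) := by
  rintro ⟨i, j⟩ ⟨i', j'⟩ h
  obtain rfl : i = i' := by
    simpa only [reduceMod_label, sub_left_inj] using congrArg (reduceMod n m) h
  obtain rfl : j = j' :=
    natMulHom_injective (NeZero.ne n) (by simpa only [label, sub_left_inj] using h)
  rfl

theorem label_surjective [NeZero n] [NeZero m] :
    Function.Surjective (label : ZMod n × ZMod m → ZMod (n * m)) := by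
  refine ((Nat.bijective_iff_injective_and_card _).2 ⟨label_injective, ?_⟩).surjective
  simp

theorem isUnitStep_label [NeZero n] (hm : Odd m) {u w : ZMod n × ZMod m}
    (h : (lexCycle n m).Adj u w) : IsUnitStep (halfNat n m) (label u) (label w) := by
  rw [IsUnitStep, two_mul_halfNat hm]
  refine ((SimpleGraph.fromRel_adj _ u w).1 h).2.imp (fun h => ?_) (fun h => ?_) <;>
  · apply natCast_dvd_of_reduceMod_eq_zero
    simp only [map_sub, map_one, reduceMod_label, h]
    ring

theorem semiconj_label_shear {σ₁ : Equiv.Perm (ZMod n × ZMod m)}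
    (hσ₁ : ∀ (i : ZMod n) (j : ZMod m),
      σ₁ (i, j) = if i = 1 then (i + 1, j + 1) else (i + 1, j)) :
    Semiconj label σ₁ (shear (halfNat n m) 1 0) := by
  rintro ⟨i, j⟩
  have hone : natMulHom n m 1 = n := by simpa using natMulHom_natCast n m 1
  have hpred : 1 - (i + 1) = 1 - i - 1 := by ring
  rw [hσ₁]
  split_ifs with hi
  · have hi' : 1 - i = 0 := sub_eq_zero.2 hi.symm
    simp only [label, shear, map_add, hone, hpred, ZMod.cast_sub_one, hi', if_true, ZMod.cast_zero]
    ring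
  · have hi' : 1 - i ≠ 0 := sub_ne_zero.2 (Ne.symm hi)
    simp only [label, shear, hpred, ZMod.cast_sub_one, hi', if_false]
    ring

theorem semiconj_label_twist [NeZero n] (hm : Odd m) (hmn : m ∣ n)
    {σ₂ : Equiv.Perm (ZMod n × ZMod m)}
    (hσ₂ : ∀ (i : ZMod n) (j : ZMod m),
      σ₂ (i, j) = (2 - i, 2 - j + (ellFun (zrep i) : ZMod m))) :
    Semiconj label σ₂ (twist (halfNat n m) (4 * halfNat n m) 0) := by
  rintro ⟨i, j⟩
  have htwo : natMulHom n m 2 = n * 2 := by exact_mod_cast natMulHom_natCast n m 2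
  have hlabel : label (σ₂ (i, j)) =
      n * 2 - natMulHom n m j + n * ellFun (zrep i) - (i - 1).cast := by
    rw [hσ₂, label, map_add, map_sub, htwo, natMulHom_natCast]
    congr 2
    ring
  have hmul : halfNat n m * label (i, j) = halfNat n m * (i - 1).cast :=
    halfNat_mul_eq_of_reduceMod_eq hmn (by rw [reduceMod_label, reduceMod_cast])
  have hquad : halfNat n m * (label (i, j) * (label (i, j) - 1)) =
      halfNat n m * ((i - 1).cast * ((i - 1).cast - 1)) := by
    linear_combination (label (i, j) + (i - 1).cast - 1) * hmul
  rw [hlabel, natCast_mul_ellFun_zrep hm, twist, hquad, label]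
  linear_combination -2 * two_mul_halfNat (n := n) hm

end lexCycle

theorem statement4
    (m s n : ℕ) (hm : 3 ≤ m) (hmo : Odd m) (hs : 0 < s) (hn : n = s * m)
    (σ₁ σ₂ : Equiv.Perm (ZMod n × ZMod m))
    (hσ₁ : ∀ (i : ZMod n) (j : ZMod m),
      σ₁ (i, j) = if i = 1 then (i + 1, j + 1) else (i + 1, j))
    (hσ₂ : ∀ (i : ZMod n) (j : ZMod m),
      σ₂ (i, j) = (2 - i, 2 - j + (ellFun (zrep i) : ZMod m)))
    :
    (∀ u₁ w₁ u₂ w₂ : ZMod n × ZMod m,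
        (lexCycle n m).Adj u₁ w₁ → (lexCycle n m).Adj u₂ w₂ →
        ∃ g ∈ Subgroup.closure {σ₁, σ₂}, g u₁ = u₂ ∧ g w₁ = w₂) ∧
      (∀ u w : ZMod n × ZMod m, (lexCycle n m).Adj u w →
        ∀ g ∈ Subgroup.closure {σ₁, σ₂}, g u = u → g w = w → g = 1) := by
  have : NeZero m := ⟨by omega⟩
  have hn3 : 3 ≤ n := hn ▸ hm.trans (Nat.le_mul_of_pos_left m hs)
  have : NeZero n := ⟨by omega⟩
  have hmn : m ∣ n := hn ▸ dvd_mul_left m s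
  have hη : halfNat n m ^ 2 = 0 := halfNat_sq hmn
  have h₁ := lexCycle.semiconj_label_shear hσ₁
  have h₂ := lexCycle.semiconj_label_twist hmo hmn hσ₂
  refine ⟨fun u₁ w₁ u₂ w₂ huw₁ huw₂ => ?_, fun u w huw g hg hu hw => ?_⟩
  · obtain ⟨v₀, hv₀⟩ := lexCycle.label_surjective (0 : ZMod (n * m))
    obtain ⟨v₁, hv₁⟩ := lexCycle.label_surjective (1 : ZMod (n * m))
    have hbase {u w : ZMod n × ZMod m} (huw : (lexCycle n m).Adj u w) :=
      exists_mem_closure_map_eq hη ZMod.natCast_zmod_surjective lexCycle.label_injective h₁ h₂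
        hv₀ hv₁ (lexCycle.isUnitStep_label hmo huw)
    obtain ⟨g₁, hg₁, rfl, rfl⟩ := hbase huw₁
    obtain ⟨g₂, hg₂, rfl, rfl⟩ := hbase huw₂
    exact ⟨g₂ * g₁⁻¹, mul_mem hg₂ (inv_mem hg₁), by simp, by simp⟩
  · have hgenerators : ∀ σ ∈ ({σ₁, σ₂} : Set (Equiv.Perm (ZMod n × ZMod m))),
        ∃ f, IsShearOrTwist (halfNat n m) f ∧ Function.Semiconj lexCycle.label σ f := by
      rintro σ (rfl | rfl)
      exacts [⟨_, ⟨_, _, .inl rfl⟩, h₁⟩, ⟨_, ⟨_, _, .inr rfl⟩, h₂⟩]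
    exact eq_one_of_mem_closure_of_fixed hη (not_halfNat_dvd_two hn3) lexCycle.label_injective
      hgenerators hg (lexCycle.isUnitStep_label hmo huw) hu hw
end

section
/- There exists no involutory automorphism ρ of Γ that fixes the vertex (1,1) and satisfies ρ⁻¹σ₁ρ = σ₁⁻¹ and ρ⁻¹σ₂ρ = σ₂⁻¹. (This is the key step showing that the associated rotary map of type {mn, 2m} is chiral.) -/
/-!
The permutation `σ₁` steps cyclically through the columns and raises the second coordinate by one
each time it leaves column `1`, so it permutes all vertices in a single cycle. A map carrying `σ₁`
to `σ₁⁻¹` is therefore determined by one value: if it fixes `(1, 1)`, it must be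
`(1, j) ↦ (1, 2 - j)`, `(i, j) ↦ (2 - i, 3 - j)` for `i ≠ 1`. For this map to carry `σ₂` to `σ₂⁻¹`
as well, one needs `2 ℓ(i) = 2` in `ZMod m` for every `i ≠ 1`. But `ℓ(3) = 2`, and `4 ≠ 2` modulo
`m ≥ 3`.
-/

open Function (Semiconj)

theorem semiconj_unique_of_orbit {α β : Type*} {f g : α → β} {a : α → α} {b : β → β}
    (hf : Semiconj f a b) (hg : Semiconj g a b) {x : α} (horbit : ∀ y, ∃ k, a^[k] x = y)
    (hx : f x = g x) : f = g := by
  funext y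
  obtain ⟨k, rfl⟩ := horbit y
  rw [hf.iterate_right k x, hg.iterate_right k x, hx]

theorem two_sub_eq_one_iff {R : Type*} [AddGroupWithOne R] {x : R} : 2 - x = 1 ↔ x = 1 := by
  rw [sub_eq_iff_eq_add, ← one_add_one_eq_two, add_right_inj, eq_comm]

theorem zrep_natCast_s6 {n k : ℕ} (hk : 0 < k) (hkn : k ≤ n) : zrep (k : ZMod n) = k := by
  rcases hkn.lt_or_eq with hlt | rfl
  · rw [zrep, ZMod.val_cast_of_lt hlt, if_neg hk.ne']
  · rw [zrep, ZMod.natCast_self, ZMod.val_zero, if_pos rfl]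

theorem semiconj_symm_of_involutive_conj {α : Type*} {ρ σ : Equiv.Perm α} (hρ : ρ * ρ = 1)
    (h : ρ * σ * ρ = σ⁻¹) : Semiconj ρ σ σ.symm := by
  have hcomm : ρ * σ = σ⁻¹ * ρ := by rw [← h, mul_assoc, hρ, mul_one]
  exact DFunLike.congr_fun hcomm

section TwistedRotation

variable {n m : ℕ}

/-- The rotation of the columns of `ZMod n × ZMod m` by one step, with a twist by one in the
second coordinate on leaving column `1`: the defining property of `σ₁`. -/
def IsTwistedRotation (σ : ZMod n × ZMod m → ZMod n × ZMod m) : Prop :=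
  ∀ i j, σ (i, j) = if i = 1 then (i + 1, j + 1) else (i + 1, j)

/-- The reflection `(1, j) ↦ (1, 2 - j)`, `(i, j) ↦ (2 - i, 3 - j)` for `i ≠ 1`, which fixes
`(1, 1)` and reverses every twisted rotation. -/
def twistedReflection (v : ZMod n × ZMod m) : ZMod n × ZMod m :=
  (2 - v.1, 3 - v.2 - if v.1 = 1 then 1 else 0)

namespace IsTwistedRotation

theorem apply_eq {σ : ZMod n × ZMod m → ZMod n × ZMod m} (hσ : IsTwistedRotation σ)
    (i : ZMod n) (j : ZMod m) : σ (i, j) = (i + 1, j + if i = 1 then 1 else 0) := by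
  rw [hσ]
  split_ifs <;> simp only [add_zero]

theorem iterate_apply_two {σ : ZMod n × ZMod m → ZMod n × ZMod m} (hσ : IsTwistedRotation σ)
    (j : ZMod m) (k : ℕ) : σ^[k] (2, j) = (2 + (k : ZMod n), j + ((k / n : ℕ) : ZMod m)) := by
  induction k with
  | zero => simp
  | succ k ih =>
    have column_one_iff : (2 + k : ZMod n) = 1 ↔ n ∣ k + 1 := by
      rw [← ZMod.natCast_eq_zero_iff, ← sub_eq_zero]
      push_cast
      ring_nf
    rw [Function.iterate_succ_apply', ih, hσ.apply_eq, Nat.succ_div]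
    simp only [column_one_iff]
    push_cast
    simp only [add_assoc]

theorem exists_iterate_eq [NeZero n] [NeZero m] {σ : ZMod n × ZMod m → ZMod n × ZMod m}
    (hσ : IsTwistedRotation σ) (j : ZMod m) (v : ZMod n × ZMod m) : ∃ k, σ^[k] (2, j) = v := by
  refine ⟨(v.1 - 2).val + n * (v.2 - j).val, ?_⟩
  rw [hσ.iterate_apply_two, Nat.add_mul_div_left _ _ (NeZero.pos n),
    Nat.div_eq_of_lt (ZMod.val_lt _)]
  ext <;> simp

variable {σ : Equiv.Perm (ZMod n × ZMod m)}

theorem semiconj_twistedReflection (hσ : IsTwistedRotation σ) :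
    Semiconj twistedReflection σ σ.symm := by
  rintro ⟨i, j⟩
  rw [Equiv.eq_symm_apply]
  simp only [hσ.apply_eq, twistedReflection, two_sub_eq_one_iff]
  ext <;> dsimp only <;> ring

theorem eq_twistedReflection [NeZero n] [NeZero m] (hσ : IsTwistedRotation σ)
    {ρ : ZMod n × ZMod m → ZMod n × ZMod m} (hρ : Semiconj ρ σ σ.symm) (hfix : ρ (1, 1) = (1, 1)) :
    ρ = twistedReflection := by
  have fix_one : twistedReflection ((1, 1) : ZMod n × ZMod m) = (1, 1) := by
    ext <;> norm_num [twistedReflection]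
  have step : σ (1, 1) = (2, 2) := by
    rw [hσ, if_pos rfl, one_add_one_eq_two, one_add_one_eq_two]
  refine semiconj_unique_of_orbit hρ hσ.semiconj_twistedReflection (hσ.exists_iterate_eq 2) ?_
  rw [← step, hρ, hσ.semiconj_twistedReflection, hfix, fix_one]

end IsTwistedRotation

theorem two_mul_eq_two_of_semiconj_twistedReflection {ℓ : ZMod n → ZMod m}
    {σ : Equiv.Perm (ZMod n × ZMod m)} (hσ : ∀ i j, σ (i, j) = (2 - i, 2 - j + ℓ i))
    (h : Semiconj twistedReflection σ σ.symm) {i : ZMod n} (hi : i ≠ 1) : 2 * ℓ i = 2 := by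
  have hi' : 2 - i ≠ 1 := mt two_sub_eq_one_iff.mp hi
  have key : σ (twistedReflection (σ (i, 0))) = twistedReflection (i, 0) := by
    rw [h, Equiv.apply_symm_apply]
  simp only [hσ, twistedReflection, if_neg hi, if_neg hi', sub_sub_cancel, Prod.mk.injEq] at key
  linear_combination key.2

end TwistedRotation

theorem statement6_general {n m : ℕ} (hn : 3 ≤ n) (hm : 3 ≤ m)
    (σ₁ σ₂ : Equiv.Perm (ZMod n × ZMod m))
    (hσ₁ : ∀ (i : ZMod n) (j : ZMod m),
      σ₁ (i, j) = if i = 1 then (i + 1, j + 1) else (i + 1, j))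
    (hσ₂ : ∀ (i : ZMod n) (j : ZMod m),
      σ₂ (i, j) = (2 - i, 2 - j + (ellFun (zrep i) : ZMod m))) :
    ¬ ∃ ρ : ZMod n × ZMod m → ZMod n × ZMod m,
      ρ (1, 1) = (1, 1) ∧ Semiconj ρ σ₁ σ₁.symm ∧ Semiconj ρ σ₂ σ₂.symm := by
  rintro ⟨ρ, hfix, h₁, h₂⟩
  have : NeZero n := ⟨by omega⟩
  have : NeZero m := ⟨by omega⟩
  obtain rfl : ρ = twistedReflection := IsTwistedRotation.eq_twistedReflection hσ₁ h₁ hfix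
  have : Fact (2 < n) := ⟨hn⟩
  have : Fact (2 < m) := ⟨hm⟩
  have three_ne_one : ((3 : ℕ) : ZMod n) ≠ 1 := fun h =>
    ZMod.neg_one_ne_one (n := n) (by push_cast at h; linear_combination -h)
  have two_mul_ell : 2 * (ellFun 3 : ZMod m) = 2 := by
    simpa only [zrep_natCast_s6 three_pos hn] using
      two_mul_eq_two_of_semiconj_twistedReflection hσ₂ h₂ three_ne_one
  rw [show ellFun 3 = 2 from rfl, Nat.cast_two] at two_mul_ell
  exact ZMod.neg_one_ne_one (n := m) (by linear_combination -two_mul_ell)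

theorem statement6
    (m s n : ℕ) (hm : 3 ≤ m) (hmo : Odd m) (hs : 0 < s) (hn : n = s * m)
    (σ₁ σ₂ : Equiv.Perm (ZMod n × ZMod m))
    (hσ₁ : ∀ (i : ZMod n) (j : ZMod m),
      σ₁ (i, j) = if i = 1 then (i + 1, j + 1) else (i + 1, j))
    (hσ₂ : ∀ (i : ZMod n) (j : ZMod m),
      σ₂ (i, j) = (2 - i, 2 - j + (ellFun (zrep i) : ZMod m)))
    :
    ¬ ∃ ρ : Equiv.Perm (ZMod n × ZMod m),
      (∀ u v : ZMod n × ZMod m, (lexCycle n m).Adj (ρ u) (ρ v) ↔ (lexCycle n m).Adj u v) ∧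
      ρ * ρ = 1 ∧ ρ ((1, 1) : ZMod n × ZMod m) = (1, 1) ∧
      ρ * σ₁ * ρ = σ₁⁻¹ ∧ ρ * σ₂ * ρ = σ₂⁻¹ := by
  rintro ⟨ρ, -, hρ, hfix, h₁, h₂⟩
  exact statement6_general (hn ▸ hm.trans (Nat.le_mul_of_pos_left m hs)) hm σ₁ σ₂ hσ₁ hσ₂
    ⟨ρ, hfix, semiconj_symm_of_involutive_conj hρ h₁, semiconj_symm_of_involutive_conj hρ h₂⟩
end

section
/- The permutations σ₁ and σ₂ satisfy σ₂⁻²σ₁σ₂² = σ₁^{n+1}; in particular, the conjugate of σ₁ by σ₂² lies in the cyclic group ⟨σ₁⟩. -/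
/-!
Both `σ₁` and `σ₂²` are skew products over the base `ZMod n`. One turn around the base under `σ₁`
picks up the single increment sitting over `1`, so `σ₁ⁿ` is the vertical translation by `1`.
Since `ℓ(i) = 1 + C(i - 1, 2)` for `i ≠ 1`, and `m` divides `n` and (being odd) `C(n, 2)`, expanding
`C(a + k, 2)` with `a + k = n` gives `ℓ(2 - i) - ℓ(i) = i - 1`, so `σ₂²` shears the fibre over `i`
by `i - 1`. This shear grows by `1` from each fibre to the next, so moving it past `σ₁` costs one
vertical translation by `1`, that is, one factor `σ₁ⁿ`.
-/

section SkewProduct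

variable {α A : Type*} [AddCommMonoid A]

theorem iterate_skewProduct {F : α × A → α × A} {f : α → α} {c : α → A}
    (hF : ∀ x y, F (x, y) = (f x, y + c x)) (k : ℕ) (x : α) (y : A) :
    F^[k] (x, y) = (f^[k] x, y + birkhoffSum f c k x) := by
  induction k with
  | zero => simp
  | succ k ih =>
    rw [Function.iterate_succ_apply', ih, hF, Function.iterate_succ_apply', birkhoffSum_succ,
      add_assoc]

theorem birkhoffSum_add_one_zmod {n : ℕ} [NeZero n] (c : ZMod n → A) (i : ZMod n) :
    birkhoffSum (· + 1) c n i = ∑ a, c a := by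
  have sum_range_eq_sum_univ (g : ZMod n → A) : ∑ k ∈ Finset.range n, g k = ∑ a, g a :=
    Finset.sum_bij' (fun k _ ↦ (k : ZMod n)) (fun a _ ↦ a.val) (by simp)
      (by simp [ZMod.val_lt])
      (fun k hk ↦ ZMod.val_cast_of_lt (Finset.mem_range.mp hk)) (by simp) (by simp)
  calc birkhoffSum (· + 1) c n i = ∑ k ∈ Finset.range n, c (i + k) := by
        simp [birkhoffSum]
    _ = ∑ a, c (i + a) := sum_range_eq_sum_univ fun a ↦ c (i + a)
    _ = ∑ a, c a := Equiv.sum_comp (Equiv.addLeft i) c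

theorem iterate_skewProduct_add_one_zmod {n : ℕ} [NeZero n] {F : ZMod n × A → ZMod n × A}
    {c : ZMod n → A} (hF : ∀ i y, F (i, y) = (i + 1, y + c i)) (i : ZMod n) (y : A) :
    F^[n] (i, y) = (i, y + ∑ a, c a) := by
  rw [iterate_skewProduct hF, birkhoffSum_add_one_zmod]
  simp

theorem shear_comp_skewProduct {F T V : α × A → α × A} {f : α → α} {c d : α → A} {e : A}
    (hF : ∀ x y, F (x, y) = (f x, y + c x)) (hT : ∀ x y, T (x, y) = (x, y + d x))
    (hV : ∀ x y, V (x, y) = (x, y + e)) (hd : ∀ x, d (f x) = d x + e) :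
    T ∘ F = V ∘ F ∘ T := by
  ext1 ⟨x, y⟩
  simp only [Function.comp_apply, hF, hT, hV, hd]
  congr 1
  abel

end SkewProduct

theorem two_mul_choose_two_add_self (k : ℕ) : 2 * k.choose 2 + k = k * k := by
  induction k with
  | zero => simp
  | succ k ih =>
    rw [Nat.choose_succ_succ', Nat.choose_one_right]
    linarith

theorem dvd_choose_two_of_odd {m n : ℕ} (hm : Odd m) (hmn : m ∣ n) : m ∣ n.choose 2 := by
  refine (Nat.coprime_two_right.mpr hm).dvd_of_dvd_mul_left ?_
  rw [← Nat.dvd_add_left hmn, two_mul_choose_two_add_self]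
  exact hmn.mul_right n

theorem choose_two_sub_choose_two_of_add_eq_zero {R : Type*} [CommRing R] {a k : ℕ}
    (hadd : ((a + k : ℕ) : R) = 0) (hchoose : ((a + k).choose 2 : R) = 0) :
    (a.choose 2 : R) - k.choose 2 = k := by
  have choose_two_add : (a + k).choose 2 = a.choose 2 + a * k + k.choose 2 := by
    linarith [two_mul_choose_two_add_self (a + k), two_mul_choose_two_add_self a,
      two_mul_choose_two_add_self k]
  have two_mul_choose : (2 : R) * k.choose 2 + k = k * k := by
    exact_mod_cast congrArg (Nat.cast (R := R)) (two_mul_choose_two_add_self k)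
  rw [choose_two_add] at hchoose
  push_cast at hadd hchoose
  linear_combination hchoose - k * hadd - two_mul_choose

theorem ellFun_succ (k : ℕ) : ellFun (k + 1) = if k = 0 then 0 else 1 + k.choose 2 := by
  simp [ellFun, Nat.choose_two_right, mul_comm]

section Representatives

variable {n : ℕ} [NeZero n]

theorem ellFun_zrep_two_sub_sub_ellFun_zrep {m : ℕ} (hmn : m ∣ n) (hchoose : m ∣ n.choose 2)
    (i : ZMod n) :
    (ellFun (zrep (2 - i)) : ZMod m) - ellFun (zrep i) = ZMod.castHom hmn (ZMod m) (i - 1) := by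
  have reflect : 2 - i - 1 = -(i - 1) := by ring
  rw [zrep_eq_val_sub_one_add_one, zrep_eq_val_sub_one_add_one, reflect]
  generalize i - 1 = x
  rw [ZMod.castHom_apply, ← ZMod.natCast_val, ellFun_succ, ellFun_succ]
  by_cases hx : x = 0
  · simp [hx]
  · have val_add : (-x).val + x.val = n := by
      rw [ZMod.neg_val, if_neg hx, Nat.sub_add_cancel x.val_le]
    rw [if_neg (by simpa), if_neg (by simpa), Nat.cast_add, Nat.cast_add, add_sub_add_left_eq_sub]
    apply choose_two_sub_choose_two_of_add_eq_zero <;> rw [val_add]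
    · exact (ZMod.natCast_eq_zero_iff n m).mpr hmn
    · exact (ZMod.natCast_eq_zero_iff _ m).mpr hchoose

end Representatives

theorem statement7_general {m n : ℕ} [NeZero n] (hmn : m ∣ n) (hchoose : m ∣ n.choose 2)
    (σ₁ σ₂ : Equiv.Perm (ZMod n × ZMod m))
    (hσ₁ : ∀ (i : ZMod n) (j : ZMod m),
      σ₁ (i, j) = if i = 1 then (i + 1, j + 1) else (i + 1, j))
    (hσ₂ : ∀ (i : ZMod n) (j : ZMod m),
      σ₂ (i, j) = (2 - i, 2 - j + (ellFun (zrep i) : ZMod m))) :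
    σ₂ ^ 2 * σ₁ * (σ₂ ^ 2)⁻¹ = σ₁ ^ (n + 1) ∧
      σ₂ ^ 2 * σ₁ * (σ₂ ^ 2)⁻¹ ∈ Subgroup.zpowers σ₁ := by
  have skew (i : ZMod n) (j : ZMod m) :
      σ₁ (i, j) = (i + 1, j + (Pi.single 1 1 : ZMod n → ZMod m) i) := by
    rw [hσ₁, Pi.single_apply]
    split_ifs <;> simp
  have translation (i : ZMod n) (j : ZMod m) : (σ₁ ^ n) (i, j) = (i, j + 1) := by
    rw [← Equiv.Perm.iterate_eq_pow, iterate_skewProduct_add_one_zmod skew, Fintype.sum_pi_single']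
  have shear (i : ZMod n) (j : ZMod m) :
      (σ₂ ^ 2) (i, j) = (i, j + ZMod.castHom hmn (ZMod m) (i - 1)) := by
    rw [pow_two, Equiv.Perm.mul_apply, hσ₂, hσ₂,
      ← ellFun_zrep_two_sub_sub_ellFun_zrep hmn hchoose]
    ext <;> simp only <;> ring
  have conj_eq : σ₂ ^ 2 * σ₁ * (σ₂ ^ 2)⁻¹ = σ₁ ^ (n + 1) := by
    rw [mul_inv_eq_iff_eq_mul, pow_succ, mul_assoc]
    refine DFunLike.coe_injective (shear_comp_skewProduct skew shear translation fun i ↦ ?_)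
    rw [← map_one (ZMod.castHom hmn (ZMod m)), ← map_add]
    congr 1
    ring
  exact ⟨conj_eq, conj_eq ▸ Subgroup.npow_mem_zpowers σ₁ (n + 1)⟩

theorem statement7
    (m s n : ℕ) (hm : 3 ≤ m) (hmo : Odd m) (hs : 0 < s) (hn : n = s * m)
    (σ₁ σ₂ : Equiv.Perm (ZMod n × ZMod m))
    (hσ₁ : ∀ (i : ZMod n) (j : ZMod m),
      σ₁ (i, j) = if i = 1 then (i + 1, j + 1) else (i + 1, j))
    (hσ₂ : ∀ (i : ZMod n) (j : ZMod m),
      σ₂ (i, j) = (2 - i, 2 - j + (ellFun (zrep i) : ZMod m)))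
    :
    σ₂ ^ 2 * σ₁ * (σ₂ ^ 2)⁻¹ = σ₁ ^ (n + 1) ∧
      σ₂ ^ 2 * σ₁ * (σ₂ ^ 2)⁻¹ ∈ Subgroup.zpowers σ₁ := by
  have : NeZero n := ⟨by rw [hn]; positivity⟩
  have hmn : m ∣ n := ⟨s, by rw [hn, mul_comm]⟩
  exact statement7_general hmn (dvd_choose_two_of_odd hmo hmn) σ₁ σ₂ hσ₁ hσ₂
end

section
/- The permutation σ₁ has order 2n, the permutation σ₂ has order 2m, the product σ₁σ₂ has order 2, and the subgroup G = ⟨σ₁, σ₂⟩ of the automorphism group of Γ has order 4m²n. -/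
/-!
In the coordinates `(x, z)` with `i = x + 1` and `z = 1 - j` or `z = j` according to the parity of
the representative of `x` in `{0, …, n - 1}`, the case distinctions in `σ₁` and `σ₂` disappear:
`σ₁` becomes `(x, z) ↦ (x + 1, 1 - z)` and `σ₂` becomes `(x, z) ↦ (-x, 2x - z)`. Both lie in the
group of all permutations `(x, z) ↦ (± x + a, ± z + b + c x)`, of order `2 · 2 · n · m · m`.

The first is the product of the translation `x ↦ x + 1`, of odd order `n`, and the commuting
involution `z ↦ 1 - z`; the second is the product of the shear `z ↦ z - 2x`, of odd order `m`, and
the commuting involution `-1`. This gives the orders, and as the orders of the factors are coprime,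
the generated group contains all four factors. Commutators of shears and translations are the
translations of `z`, and then all signs are available, so the whole group is generated.
-/

section OddOrderMulInvolution

variable {G : Type*} [Group G] {x y : G}

theorem orderOf_mul_of_odd_of_orderOf_eq_two (hxy : Commute x y) (hx : Odd (orderOf x))
    (hy : orderOf y = 2) : orderOf (x * y) = 2 * orderOf x := by
  have hcop : (orderOf x).Coprime (orderOf y) := by rwa [hy, Nat.coprime_two_right]
  rw [hxy.orderOf_mul_eq_mul_orderOf_of_coprime hcop, hy, mul_comm]

theorem mem_and_mem_of_mul_mem_of_odd {H : Subgroup G} (hxy : Commute x y)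
    (hx : Odd (orderOf x)) (hy : orderOf y = 2) (h : x * y ∈ H) : x ∈ H ∧ y ∈ H := by
  have hpow : (x * y) ^ orderOf x = y := by
    obtain ⟨k, hk⟩ := hx
    rw [hxy.mul_pow, pow_orderOf_eq_one, one_mul, hk, pow_succ, pow_mul, ← hy,
      pow_orderOf_eq_one, one_pow, one_mul]
  have hyH : y ∈ H := hpow ▸ H.pow_mem h _
  exact ⟨(H.mul_mem_cancel_right hyH).1 h, hyH⟩

end OddOrderMulInvolution

theorem card_closure_image_mulEquiv {G G' : Type*} [Group G] [Group G'] (f : G ≃* G')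
    (S : Set G) : Nat.card (Subgroup.closure (f '' S)) = Nat.card (Subgroup.closure S) := by
  have hmap : Subgroup.closure (f '' S) = (Subgroup.closure S).map f.toMonoidHom :=
    (f.toMonoidHom.map_closure S).symm
  rw [hmap, Subgroup.card_map_of_injective f.injective]

section SignedAffine

variable {A B : Type*} [AddCommGroup A] [AddCommGroup B]

/-- The permutation `(x, z) ↦ (e x + a, d z + b + φ x)` of `A × B`, where `e` and `d` are signs:
the affine maps preserving the fibration over `A` and acting by signs on both factors. -/
def signedAffine (e d : ℤˣ) (a : A) (b : B) (φ : A →+ B) : Equiv.Perm (A × B) :=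
  Equiv.prodShear ((MulAction.toPerm e).trans (Equiv.addRight a))
    fun x => (MulAction.toPerm d).trans (Equiv.addRight (b + φ x))

theorem signedAffine_apply (e d : ℤˣ) (a : A) (b : B) (φ : A →+ B) (x : A) (z : B) :
    signedAffine e d a b φ (x, z) = (e • x + a, d • z + (b + φ x)) := rfl

theorem signedAffine_one : signedAffine 1 1 (0 : A) (0 : B) 0 = 1 := by
  ext ⟨x, z⟩ <;> simp [signedAffine_apply]

theorem signedAffine_mul (e d e' d' : ℤˣ) (a a' : A) (b b' : B) (φ φ' : A →+ B) :
    signedAffine e d a b φ * signedAffine e' d' a' b' φ' =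
      signedAffine (e * e') (d * d') (e • a' + a) (d • b' + b + φ a') (d • φ' + e' • φ) := by
  have map_sign_smul (x : A) : φ (e' • x) = e' • φ x := by simp only [Units.smul_def, map_zsmul]
  ext ⟨x, z⟩ <;>
    simp only [Equiv.Perm.mul_apply, signedAffine_apply, mul_smul, smul_add, map_add,
      map_sign_smul, AddMonoidHom.add_apply, AddMonoidHom.smul_apply] <;> abel

theorem signedAffine_inv (e d : ℤˣ) (a : A) (b : B) (φ : A →+ B) :
    (signedAffine e d a b φ)⁻¹ =
      signedAffine e d (-(e • a)) (d • (φ (e • a) - b)) (-((d * e) • φ)) := by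
  refine inv_eq_of_mul_eq_one_left ?_
  rw [signedAffine_mul, ← signedAffine_one]
  congr 1
  · exact Int.units_mul_self e
  · exact Int.units_mul_self d
  · simp
  · simp [mul_smul, Units.smul_def, smul_sub]
  · rw [smul_neg, smul_smul, mul_left_comm, Int.units_mul_self, mul_one, add_neg_cancel]

theorem signedAffine_pow {a : A} {φ : A →+ B} (hφ : φ a = 0) (b : B) (k : ℕ) :
    signedAffine 1 1 a b φ ^ k = signedAffine 1 1 (k • a) (k • b) (k • φ) := by
  induction k with
  | zero => simp [signedAffine_one]
  | succ k ih =>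
    simp only [pow_succ, ih, signedAffine_mul, one_smul, mul_one, succ_nsmul,
      AddMonoidHom.smul_apply, hφ, smul_zero, add_zero, add_comm]

theorem signedAffine_zpow {a : A} {φ : A →+ B} (hφ : φ a = 0) (b : B) (k : ℤ) :
    signedAffine 1 1 a b φ ^ k = signedAffine 1 1 (k • a) (k • b) (k • φ) := by
  obtain ⟨k, rfl | rfl⟩ := k.eq_nat_or_neg <;>
    simp [signedAffine_pow hφ, signedAffine_inv, hφ]

theorem signedAffine_one_one_eq_one_iff {a : A} {b : B} {φ : A →+ B} :
    signedAffine 1 1 a b φ = 1 ↔ a = 0 ∧ b = 0 ∧ φ = 0 := by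
  refine ⟨fun h => ?_, by rintro ⟨rfl, rfl, rfl⟩; exact signedAffine_one⟩
  have apply_eq (x : A) : a = 0 ∧ b + φ x = 0 := by
    simpa [signedAffine_apply] using Equiv.congr_fun h (x, 0)
  obtain rfl : b = 0 := by simpa using (apply_eq 0).2
  exact ⟨(apply_eq 0).1, rfl, AddMonoidHom.ext fun x => by simpa using (apply_eq x).2⟩

theorem orderOf_signedAffine_one_one {a : A} {φ : A →+ B} (hφ : φ a = 0) (b : B) :
    orderOf (signedAffine 1 1 a b φ) = addOrderOf (a, b, φ) := by
  refine Nat.dvd_antisymm ?_ ?_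
  · apply orderOf_dvd_of_pow_eq_one
    simpa [signedAffine_pow hφ, signedAffine_one_one_eq_one_iff] using
      addOrderOf_nsmul_eq_zero (a, b, φ)
  · apply addOrderOf_dvd_of_nsmul_eq_zero
    simpa [signedAffine_pow hφ, signedAffine_one_one_eq_one_iff] using
      pow_orderOf_eq_one (signedAffine 1 1 a b φ)

theorem orderOf_signedAffine_translation (a : A) :
    orderOf (signedAffine 1 1 a (0 : B) 0) = addOrderOf a := by
  simp [orderOf_signedAffine_one_one, Prod.addOrderOf_mk]

theorem orderOf_signedAffine_shear (φ : A →+ B) :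
    orderOf (signedAffine 1 1 0 0 φ) = addOrderOf φ := by
  simp [orderOf_signedAffine_one_one, Prod.addOrderOf_mk]

theorem commute_signedAffine_translation_fiberwise (d : ℤˣ) (a : A) (b : B) :
    Commute (signedAffine 1 1 a 0 0) (signedAffine 1 d 0 b 0) := by
  simp [commute_iff_eq, signedAffine_mul]

theorem commute_signedAffine_shear_neg (φ : A →+ B) :
    Commute (signedAffine 1 1 0 0 φ) (signedAffine (-1) (-1) 0 0 0) := by
  simp [commute_iff_eq, signedAffine_mul]

theorem signedAffine_translation_mul_fiberwise (d : ℤˣ) (a : A) (b : B) :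
    signedAffine 1 1 a 0 0 * signedAffine 1 d 0 b 0 = signedAffine 1 d a b 0 := by
  simp [signedAffine_mul]

theorem signedAffine_shear_mul_neg (φ : A →+ B) :
    signedAffine 1 1 0 0 (-φ) * signedAffine (-1) (-1) 0 0 0 = signedAffine (-1) (-1) 0 0 φ := by
  simp [signedAffine_mul]

variable (A B) in
/-- The group of all permutations `signedAffine e d a b φ` of `A × B`. -/
def signedAffineSubgroup : Subgroup (Equiv.Perm (A × B)) where
  carrier := {f | ∃ e d a b φ, signedAffine e d a b φ = f}
  mul_mem' := by
    rintro _ _ ⟨e, d, a, b, φ, rfl⟩ ⟨e', d', a', b', φ', rfl⟩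
    exact ⟨_, _, _, _, _, (signedAffine_mul e d e' d' a a' b b' φ φ').symm⟩
  one_mem' := ⟨1, 1, 0, 0, 0, signedAffine_one⟩
  inv_mem' := by
    rintro _ ⟨e, d, a, b, φ, rfl⟩
    exact ⟨_, _, _, _, _, (signedAffine_inv e d a b φ).symm⟩

theorem signedAffine_mem_signedAffineSubgroup (e d : ℤˣ) (a : A) (b : B) (φ : A →+ B) :
    signedAffine e d a b φ ∈ signedAffineSubgroup A B := ⟨e, d, a, b, φ, rfl⟩

theorem signedAffineSubgroup_le {H : Subgroup (Equiv.Perm (A × B))} {a₀ : A} {b₀ : B}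
    {ψ : A →+ B} (ha₀ : AddSubgroup.zmultiples a₀ = ⊤) (hψ : AddSubgroup.zmultiples ψ = ⊤)
    (heval : Function.Surjective fun φ : A →+ B => φ a₀)
    (htrans : signedAffine 1 1 a₀ 0 0 ∈ H) (hrefl : signedAffine 1 (-1) 0 b₀ 0 ∈ H)
    (hshear : signedAffine 1 1 0 0 ψ ∈ H) (hneg : signedAffine (-1) (-1) 0 0 0 ∈ H) :
    signedAffineSubgroup A B ≤ H := by
  have htrans_mem (a : A) : signedAffine 1 1 a 0 0 ∈ H := by
    obtain ⟨k, rfl⟩ := AddSubgroup.mem_zmultiples_iff.1 (ha₀ ▸ AddSubgroup.mem_top a)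
    simpa [signedAffine_zpow] using H.zpow_mem htrans k
  have hshear_mem (φ : A →+ B) : signedAffine 1 1 0 0 φ ∈ H := by
    obtain ⟨k, rfl⟩ := AddSubgroup.mem_zmultiples_iff.1 (hψ ▸ AddSubgroup.mem_top φ)
    simpa [signedAffine_zpow] using H.zpow_mem hshear k
  have hfiber_trans_mem (b : B) : signedAffine 1 1 0 b 0 ∈ H := by
    obtain ⟨φ, rfl⟩ := heval b
    simpa [signedAffine_mul] using H.mul_mem (H.mul_mem (H.mul_mem (hshear_mem φ) htrans)
      (hshear_mem (-φ))) (htrans_mem (-a₀))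
  have hfiber_neg : signedAffine 1 (-1) 0 0 0 ∈ H := by
    simpa [signedAffine_mul] using H.mul_mem (hfiber_trans_mem (-b₀)) hrefl
  have hbase_neg : signedAffine (-1) 1 0 0 0 ∈ H := by
    simpa [signedAffine_mul] using H.mul_mem hneg hfiber_neg
  have hfiber_sign (d : ℤˣ) : signedAffine 1 d 0 0 0 ∈ H := by
    obtain rfl | rfl := Int.units_eq_one_or d
    exacts [htrans_mem 0, hfiber_neg]
  have hbase_sign (e : ℤˣ) : signedAffine e 1 0 0 0 ∈ H := by
    obtain rfl | rfl := Int.units_eq_one_or e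
    exacts [htrans_mem 0, hbase_neg]
  rintro _ ⟨e, d, a, b, φ, rfl⟩
  simpa [signedAffine_mul] using H.mul_mem (H.mul_mem (H.mul_mem (H.mul_mem
    (hfiber_trans_mem b) (htrans_mem a)) (hbase_sign e)) (hshear_mem φ)) (hfiber_sign d)

variable [FaithfulSMul ℤˣ A] [FaithfulSMul ℤˣ B]

theorem signedAffine_inj {e d e' d' : ℤˣ} {a a' : A} {b b' : B} {φ φ' : A →+ B} :
    signedAffine e d a b φ = signedAffine e' d' a' b' φ' ↔
      e = e' ∧ d = d' ∧ a = a' ∧ b = b' ∧ φ = φ' := by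
  refine ⟨fun h => ?_, by rintro ⟨rfl, rfl, rfl, rfl, rfl⟩; rfl⟩
  have apply_eq (x : A) (z : B) :
      e • x + a = e' • x + a' ∧ d • z + (b + φ x) = d' • z + (b' + φ' x) := by
    simpa only [signedAffine_apply, Prod.mk.injEq] using Equiv.congr_fun h (x, z)
  obtain rfl : a = a' := by simpa using (apply_eq 0 0).1
  obtain rfl : b = b' := by simpa using (apply_eq 0 0).2
  exact ⟨eq_of_smul_eq_smul fun x : A => add_right_cancel (apply_eq x 0).1,
    eq_of_smul_eq_smul fun z : B => by simpa using (apply_eq 0 z).2, rfl, rfl,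
    AddMonoidHom.ext fun x => by simpa using (apply_eq x 0).2⟩

variable (A B) in
theorem card_signedAffineSubgroup :
    Nat.card (signedAffineSubgroup A B) =
      4 * (Nat.card A * Nat.card B * Nat.card (A →+ B)) := by
  let params : ℤˣ × ℤˣ × A × B × (A →+ B) → signedAffineSubgroup A B :=
    fun ⟨e, d, a, b, φ⟩ => ⟨_, signedAffine_mem_signedAffineSubgroup e d a b φ⟩
  have hparams : params.Bijective := by
    constructor
    · rintro ⟨e, d, a, b, φ⟩ ⟨e', d', a', b', φ'⟩ h
      simpa only [Prod.mk.injEq] using signedAffine_inj.1 (congrArg Subtype.val h)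
    · rintro ⟨_, e, d, a, b, φ, rfl⟩
      exact ⟨(e, d, a, b, φ), rfl⟩
  rw [← Nat.card_eq_of_bijective params hparams]
  simp only [Nat.card_prod, Nat.card_eq_fintype_card (α := ℤˣ), Fintype.card_units_int]
  ring

theorem orderOf_signedAffine_eq_two {e d : ℤˣ} {a : A} {b : B} {φ : A →+ B}
    (hne : e ≠ 1 ∨ d ≠ 1) (ha : e • a + a = 0) (hb : d • b + b + φ a = 0)
    (hφ : d • φ + e • φ = 0) : orderOf (signedAffine e d a b φ) = 2 := by
  refine orderOf_eq_prime ?_ fun h => ?_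
  · rw [pow_two, signedAffine_mul, Int.units_mul_self, Int.units_mul_self, ha, hb, hφ,
      signedAffine_one]
  · obtain ⟨he, hd, -⟩ := signedAffine_inj.1 (h.trans signedAffine_one.symm)
    exact hne.elim (· he) (· hd)

theorem orderOf_signedAffine_fiberReflection (b : B) :
    orderOf (signedAffine 1 (-1) (0 : A) b 0) = 2 :=
  orderOf_signedAffine_eq_two (by decide) (by simp) (by simp) (by simp)

variable (A B) in
theorem orderOf_signedAffine_neg : orderOf (signedAffine (-1) (-1) (0 : A) (0 : B) 0) = 2 :=
  orderOf_signedAffine_eq_two (by decide) (by simp) (by simp) (by simp)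

theorem orderOf_signedAffine_translation_fiberReflection {a : A} (ha : Odd (addOrderOf a)) (b : B) :
    orderOf (signedAffine 1 (-1) a b 0) = 2 * addOrderOf a := by
  rw [← orderOf_signedAffine_translation (B := B)] at ha ⊢
  rw [← signedAffine_translation_mul_fiberwise]
  exact orderOf_mul_of_odd_of_orderOf_eq_two (commute_signedAffine_translation_fiberwise _ _ _) ha
    (orderOf_signedAffine_fiberReflection b)

theorem orderOf_signedAffine_neg_shear {φ : A →+ B} (hφ : Odd (addOrderOf φ)) :
    orderOf (signedAffine (-1) (-1) 0 0 φ) = 2 * addOrderOf φ := by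
  rw [← addOrderOf_neg, ← orderOf_signedAffine_shear] at hφ ⊢
  rw [← signedAffine_shear_mul_neg,
    orderOf_mul_of_odd_of_orderOf_eq_two (commute_signedAffine_shear_neg (-φ)) hφ
      (orderOf_signedAffine_neg A B)]

theorem signedAffineSubgroup_le_of_mem_of_mem {H : Subgroup (Equiv.Perm (A × B))} {a : A} {b : B}
    {φ : A →+ B} (ha : AddSubgroup.zmultiples a = ⊤) (hφ : AddSubgroup.zmultiples φ = ⊤)
    (heval : Function.Surjective fun ψ : A →+ B => ψ a)
    (ha_odd : Odd (addOrderOf a)) (hφ_odd : Odd (addOrderOf φ))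
    (htrans_refl : signedAffine 1 (-1) a b 0 ∈ H) (hneg_shear : signedAffine (-1) (-1) 0 0 φ ∈ H) :
    signedAffineSubgroup A B ≤ H := by
  rw [← orderOf_signedAffine_translation (B := B)] at ha_odd
  rw [← addOrderOf_neg, ← orderOf_signedAffine_shear] at hφ_odd
  rw [← signedAffine_translation_mul_fiberwise] at htrans_refl
  rw [← signedAffine_shear_mul_neg] at hneg_shear
  obtain ⟨htrans, hrefl⟩ := mem_and_mem_of_mul_mem_of_odd
    (commute_signedAffine_translation_fiberwise (-1) a b) ha_odd
    (orderOf_signedAffine_fiberReflection b) htrans_refl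
  obtain ⟨hshear, hneg⟩ := mem_and_mem_of_mul_mem_of_odd
    (commute_signedAffine_shear_neg (-φ)) hφ_odd (orderOf_signedAffine_neg A B) hneg_shear
  rw [← AddSubgroup.zmultiples_neg] at hφ
  exact signedAffineSubgroup_le ha hφ heval htrans hrefl hshear hneg

theorem closure_signedAffine_pair {a : A} {φ : A →+ B} (b : B)
    (ha : AddSubgroup.zmultiples a = ⊤) (hφ : AddSubgroup.zmultiples φ = ⊤)
    (heval : Function.Surjective fun ψ : A →+ B => ψ a)
    (ha_odd : Odd (addOrderOf a)) (hφ_odd : Odd (addOrderOf φ)) :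
    Subgroup.closure {signedAffine 1 (-1) a b 0, signedAffine (-1) (-1) 0 0 φ} =
      signedAffineSubgroup A B := by
  refine le_antisymm ?_ (signedAffineSubgroup_le_of_mem_of_mem ha hφ heval ha_odd hφ_odd
    (Subgroup.subset_closure (Set.mem_insert _ _))
    (Subgroup.subset_closure (Set.mem_insert_of_mem _ rfl)))
  rw [Subgroup.closure_le, Set.pair_subset_iff]
  exact ⟨signedAffine_mem_signedAffineSubgroup .., signedAffine_mem_signedAffineSubgroup ..⟩

end SignedAffine

section ZMod

variable {n m : ℕ}

instance faithfulSMul_units_int_zmod [Fact (2 < n)] : FaithfulSMul ℤˣ (ZMod n) where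
  eq_of_smul_eq_smul {e d} h := by
    have hne : (-1 : ZMod n) ≠ 1 := ZMod.neg_one_ne_one
    obtain rfl | rfl := Int.units_eq_one_or e <;> obtain rfl | rfl := Int.units_eq_one_or d
    · rfl
    · exact absurd (by simpa using (h 1).symm) hne
    · exact absurd (by simpa using h 1) hne
    · rfl

/-- For `m ∣ n`, evaluation at `1` identifies the homomorphisms `ZMod n →+ ZMod m` with
`ZMod m`: the inverse sends `c` to `x ↦ c x`. -/
def zmodAddHomEquiv (h : m ∣ n) : (ZMod n →+ ZMod m) ≃+ ZMod m where
  toFun φ := φ 1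
  invFun c := (AddMonoidHom.mulLeft c).comp (ZMod.castHom h (ZMod m)).toAddMonoidHom
  map_add' _ _ := rfl
  left_inv φ := by
    ext x
    obtain ⟨k, rfl⟩ := ZMod.intCast_surjective x
    simpa [mul_comm] using (map_zsmul φ k 1).symm
  right_inv c := by simp [-ZMod.castHom_apply]

theorem zmodAddHomEquiv_symm_apply (h : m ∣ n) (c : ZMod m) (x : ZMod n) :
    (zmodAddHomEquiv h).symm c x = c * ZMod.castHom h (ZMod m) x := rfl

theorem addOrderOf_zmodAddHomEquiv_symm_two (h : m ∣ n) (hm : Odd m) :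
    addOrderOf ((zmodAddHomEquiv h).symm 2) = m := by
  have hcop : (addOrderOf (1 : ZMod m)).Coprime 2 := by
    rwa [ZMod.addOrderOf_one, Nat.coprime_two_right]
  rw [AddEquiv.addOrderOf_eq, ← Nat.cast_ofNat, ← nsmul_one, hcop.addOrderOf_nsmul,
    ZMod.addOrderOf_one]

theorem zmultiples_zmodAddHomEquiv_symm_two (h : m ∣ n) (hm : Odd m) :
    AddSubgroup.zmultiples ((zmodAddHomEquiv h).symm 2) = ⊤ := by
  have : NeZero m := ⟨hm.pos.ne'⟩
  have : Finite (ZMod n →+ ZMod m) := Finite.of_equiv _ (zmodAddHomEquiv h).symm.toEquiv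
  apply AddSubgroup.eq_top_of_card_eq
  rw [Nat.card_zmultiples, addOrderOf_zmodAddHomEquiv_symm_two h hm,
    Nat.card_congr (zmodAddHomEquiv h).toEquiv, Nat.card_zmod]

variable (n m) in
/-- The permutation `(x, z) ↦ (x + 1, 1 - z)`, conjugate to `σ₁`. -/
def reflectedShift : Equiv.Perm (ZMod n × ZMod m) := signedAffine 1 (-1) 1 1 0

/-- The permutation `(x, z) ↦ (-x, 2x - z)`, conjugate to `σ₂`. -/
def shearedNeg (h : m ∣ n) : Equiv.Perm (ZMod n × ZMod m) :=
  signedAffine (-1) (-1) 0 0 ((zmodAddHomEquiv h).symm 2)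

section Model

variable [Fact (2 < n)] [Fact (2 < m)]

theorem orderOf_reflectedShift (hn : Odd n) : orderOf (reflectedShift n m) = 2 * n := by
  rw [reflectedShift, orderOf_signedAffine_translation_fiberReflection, ZMod.addOrderOf_one]
  rwa [ZMod.addOrderOf_one]

theorem orderOf_shearedNeg (h : m ∣ n) (hm : Odd m) : orderOf (shearedNeg h) = 2 * m := by
  rw [shearedNeg, orderOf_signedAffine_neg_shear, addOrderOf_zmodAddHomEquiv_symm_two h hm]
  rwa [addOrderOf_zmodAddHomEquiv_symm_two h hm]

theorem orderOf_reflectedShift_mul_shearedNeg (h : m ∣ n) :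
    orderOf (reflectedShift n m * shearedNeg h) = 2 := by
  have heval : (zmodAddHomEquiv h).symm 2 1 = 2 := (zmodAddHomEquiv h).apply_symm_apply 2
  rw [reflectedShift, shearedNeg, signedAffine_mul]
  refine orderOf_signedAffine_eq_two (by decide) (by simp) ?_ (by simp)
  norm_num [heval]

theorem card_closure_reflectedShift_shearedNeg (h : m ∣ n) (hn : Odd n) (hm : Odd m) :
    Nat.card (Subgroup.closure {reflectedShift n m, shearedNeg h}) = 4 * m ^ 2 * n := by
  have hone : AddSubgroup.zmultiples (1 : ZMod n) = ⊤ :=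
    (AddSubgroup.eq_top_iff' _).2 fun x => AddSubgroup.mem_zmultiples_iff.2 <| by
      obtain ⟨k, rfl⟩ := ZMod.intCast_surjective x
      exact ⟨k, zsmul_one k⟩
  have hclosure : Subgroup.closure {reflectedShift n m, shearedNeg h} =
      signedAffineSubgroup (ZMod n) (ZMod m) :=
    closure_signedAffine_pair 1 hone (zmultiples_zmodAddHomEquiv_symm_two h hm)
      (zmodAddHomEquiv h).surjective (by rwa [ZMod.addOrderOf_one])
      (by rwa [addOrderOf_zmodAddHomEquiv_symm_two h hm])
  rw [hclosure, card_signedAffineSubgroup, Nat.card_congr (zmodAddHomEquiv h).toEquiv,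
    Nat.card_zmod, Nat.card_zmod]
  ring

end Model

variable (n m) in
/-- The change of coordinates `(x, z) ↦ (i, j)` that straightens `σ₁` and `σ₂`. The parity is that
of the representative of `x = i - 1` in `{0, …, n - 1}`. -/
def untwist : Equiv.Perm (ZMod n × ZMod m) :=
  Equiv.prodShear (Equiv.addRight 1)
    fun x => if Even x.val then Equiv.subLeft 1 else Equiv.refl _

theorem untwist_apply (x : ZMod n) (z : ZMod m) :
    untwist n m (x, z) = (x + 1, if Even x.val then 1 - z else z) := by
  unfold untwist
  split_ifs with hx <;> simp [hx]

theorem val_add_one_of_ne_neg_one [NeZero n] {x : ZMod n} (hx : x ≠ -1) :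
    (x + 1).val = x.val + 1 := by
  have hlt : x.val + 1 < n := by
    refine lt_of_le_of_ne x.val_lt fun h => hx (eq_neg_of_add_eq_zero_left ?_)
    rw [← ZMod.natCast_zmod_val x, ← Nat.cast_add_one, h, ZMod.natCast_self]
  rw [← ZMod.val_natCast_of_lt hlt, Nat.cast_add_one, ZMod.natCast_zmod_val]

theorem zrep_add_one [NeZero n] (x : ZMod n) : zrep (x + 1) = x.val + 1 := by
  unfold zrep
  split_ifs with hx
  · obtain ⟨k, rfl⟩ := Nat.exists_eq_succ_of_ne_zero (NeZero.ne n)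
    rw [eq_neg_of_add_eq_zero_left ((ZMod.val_eq_zero _).1 hx), ZMod.val_neg_one]
  · refine val_add_one_of_ne_neg_one fun h => hx ?_
    rw [h, neg_add_cancel, ZMod.val_zero]

theorem even_val_neg_one (hn : Odd n) : Even (-1 : ZMod n).val := by
  obtain ⟨k, rfl⟩ := hn
  rw [ZMod.val_neg_one]
  exact even_two_mul k

theorem even_val_neg_iff (hn : Odd n) {x : ZMod n} (hx : x ≠ 0) :
    Even (-x).val ↔ ¬ Even x.val := by
  have : NeZero n := ⟨hn.pos.ne'⟩
  rw [ZMod.neg_val, if_neg hx, Nat.even_sub x.val_le]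
  simp only [Nat.not_even_iff_odd.2 hn, false_iff]

theorem conj_untwist_reflectedShift (hn : Odd n) {σ₁ : Equiv.Perm (ZMod n × ZMod m)}
    (hσ₁ : ∀ (i : ZMod n) (j : ZMod m),
      σ₁ (i, j) = if i = 0 then (i + 1, 1 - j) else (i + 1, j)) :
    MulAut.conj (untwist n m) (reflectedShift n m) = σ₁ := by
  have : NeZero n := ⟨hn.pos.ne'⟩
  rw [MulAut.conj_apply, mul_inv_eq_iff_eq_mul]
  ext1 ⟨x, z⟩
  simp only [Equiv.Perm.mul_apply, reflectedShift, signedAffine_apply, untwist_apply, hσ₁]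
  by_cases hx : x = -1
  · simp [hx, even_val_neg_one hn]
  · have hparity : Even (x + 1).val ↔ ¬ Even x.val := by
      rw [val_add_one_of_ne_neg_one hx, Nat.even_add_one]
    have hx0 : x + 1 ≠ 0 := fun h => hx (eq_neg_of_add_eq_zero_left h)
    by_cases heven : Even x.val <;> simp [heven, hparity, hx0, neg_add_eq_sub]

theorem conj_untwist_shearedNeg (h : m ∣ n) (hn : Odd n) {σ₂ : Equiv.Perm (ZMod n × ZMod m)}
    (hσ₂ : ∀ (i : ZMod n) (j : ZMod m),
      σ₂ (i, j) = if i = 1 then (2 - i, 2 - j)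
        else (2 - i, j + (-1 : ZMod m) ^ (zrep i - 1) * ((2 * zrep i - 3 : ℕ) : ZMod m))) :
    MulAut.conj (untwist n m) (shearedNeg h) = σ₂ := by
  have : NeZero n := ⟨hn.pos.ne'⟩
  rw [MulAut.conj_apply, mul_inv_eq_iff_eq_mul]
  ext1 ⟨x, z⟩
  have hbase : -x + 1 = 2 - (x + 1) := by ring
  simp only [Equiv.Perm.mul_apply, shearedNeg, signedAffine_apply, untwist_apply, hσ₂,
    zrep_add_one, zmodAddHomEquiv_symm_apply, Units.neg_smul, one_smul, add_zero, zero_add,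
    add_eq_right, add_tsub_cancel_right, hbase]
  by_cases hx : x = 0
  · simp only [hx, neg_zero, map_zero, mul_zero, add_zero, ZMod.val_zero, Even.zero, if_true]
    congr 1
    ring
  · have hcoeff : ((2 * (x.val + 1) - 3 : ℕ) : ZMod m) = 2 * ZMod.castHom h (ZMod m) x - 1 := by
      have hpos : 0 < x.val := Nat.pos_of_ne_zero (mt (ZMod.val_eq_zero x).1 hx)
      rw [show 2 * (x.val + 1) - 3 = 2 * x.val - 1 by omega, Nat.cast_sub (by omega)]
      simp [ZMod.natCast_val]
    rw [if_neg hx, hcoeff]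
    congr 1
    by_cases heven : Even x.val
    · simp only [heven, even_val_neg_iff hn hx, heven.neg_one_pow, not_true, if_true, if_false]
      ring
    · have hodd : Odd x.val := Nat.not_even_iff_odd.1 heven
      simp only [heven, even_val_neg_iff hn hx, hodd.neg_one_pow, not_false_iff, if_true, if_false]
      ring

end ZMod

theorem statement8
    (m s n : ℕ) (hm : 3 ≤ m) (hmo : Odd m) (hs : 0 < s) (hso : Odd s) (hn : n = s * m)
    (σ₁ σ₂ : Equiv.Perm (ZMod n × ZMod m))
    (hσ₁ : ∀ (i : ZMod n) (j : ZMod m),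
      σ₁ (i, j) = if i = 0 then (i + 1, 1 - j) else (i + 1, j))
    (hσ₂ : ∀ (i : ZMod n) (j : ZMod m),
      σ₂ (i, j) = if i = 1 then (2 - i, 2 - j)
        else (2 - i, j + (-1 : ZMod m) ^ (zrep i - 1) * ((2 * zrep i - 3 : ℕ) : ZMod m)))
    :
    orderOf σ₁ = 2 * n ∧ orderOf σ₂ = 2 * m ∧ orderOf (σ₁ * σ₂) = 2 ∧
      Nat.card (Subgroup.closure {σ₁, σ₂} : Subgroup (Equiv.Perm (ZMod n × ZMod m))) = 4 * m ^ 2 * n := by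
  have hmn : m ∣ n := hn ▸ dvd_mul_left m s
  have hno : Odd n := hn ▸ hso.mul hmo
  have : Fact (2 < m) := ⟨hm⟩
  have : Fact (2 < n) := ⟨hm.trans (Nat.le_of_dvd hno.pos hmn)⟩
  rw [← conj_untwist_reflectedShift hno hσ₁, ← conj_untwist_shearedNeg hmn hno hσ₂]
  refine ⟨?_, ?_, ?_, ?_⟩
  · rw [MulEquiv.orderOf_eq, orderOf_reflectedShift hno]
  · rw [MulEquiv.orderOf_eq, orderOf_shearedNeg hmn hmo]
  · rw [← map_mul, MulEquiv.orderOf_eq, orderOf_reflectedShift_mul_shearedNeg hmn]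
  · rw [← Set.image_pair, card_closure_image_mulEquiv,
      card_closure_reflectedShift_shearedNeg hmn hno hmo]
end
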